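/- arXiv:2401.10847 — 4 statements merged into one kernel-verified Lean document; each statement's English description precedes it below -/
import Mathlib

section
/- There exists a set 𝒜 of isomorphism classes of finite graphs such that no member of 𝒜 contains a subgraph isomorphic to a different member of 𝒜 (i.e. 𝒜 is an antichain under subgraph containment), and a constant C > 0, such that, writing 𝒜_m for the set of members of 𝒜 with exactly m edges, for all sufficiently large integers m the following hold: exp(m·log m − C·m·log log m) ≤ |𝒜_m| ≤ exp(m·log m + C·m·log log m); every G ∈ 𝒜_m satisfies | |V(G)| − m/log m | ≤ C; and every G ∈ 𝒜_m has minimum degree at least max(1, (log m)/C). -/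
open SimpleGraph Filter Topology

/-- `H` (on `β`) is contained in `G` (on `α`): `G` has a subgraph isomorphic to `H`. -/
def Contains {α β : Type*} (G : SimpleGraph α) (H : SimpleGraph β) : Prop :=
  ∃ f : β ↪ α, ∀ a b : β, H.Adj a b → G.Adj (f a) (f b)

/-- `G` has `m` edges, odd girth `L` (witnessed by a homomorphism from, and one to, the cycle of
length `L`), maximum degree `h` and minimum degree at least `t`. -/
structure HasProfile {V : Type*} (m L h t : ℕ) (G : SimpleGraph V) : Prop where
  card_edgeSet : Nat.card G.edgeSet = m
  coloring : ∃ c : V → ZMod L, ∀ u v, G.Adj u v → c v = c u + 1 ∨ c u = c v + 1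
  cycle : ∃ z : ZMod L → V, ∀ i, G.Adj (z i) (z (i + 1))
  degree_le : ∀ v, Nat.card (G.neighborSet v) ≤ h
  le_degree : ∃ v, h ≤ Nat.card (G.neighborSet v)
  minDegree : ∀ v, t ≤ Nat.card (G.neighborSet v)

theorem HasProfile.of_iso {V W : Type*} {m L h t : ℕ} {G : SimpleGraph V} {H : SimpleGraph W}
    (hG : HasProfile m L h t G) (e : G ≃g H) : HasProfile m L h t H := by
  have hdeg : ∀ w, Nat.card (H.neighborSet w) = Nat.card (G.neighborSet (e.symm w)) :=
    fun w => Nat.card_congr (e.symm.mapNeighborSet w)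
  refine ⟨?_, ?_, ?_, ?_, ?_, ?_⟩
  · rw [← hG.card_edgeSet]
    exact Nat.card_congr e.symm.mapEdgeSet
  · obtain ⟨c, hc⟩ := hG.coloring
    exact ⟨fun w => c (e.symm w), fun u v huv => hc _ _ (e.symm.map_adj_iff.2 huv)⟩
  · obtain ⟨z, hz⟩ := hG.cycle
    exact ⟨fun i => e (z i), fun i => e.map_adj_iff.2 (hz i)⟩
  · exact fun w => (hdeg w).trans_le (hG.degree_le _)
  · obtain ⟨v, hv⟩ := hG.le_degree
    refine ⟨e v, ?_⟩
    rw [hdeg, e.symm_apply_apply]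
    exact hv
  · exact fun w => (hG.minDegree _).trans_eq (hdeg w).symm

/-- There is no homomorphism from an odd cycle to a longer odd cycle. -/
theorem le_of_odd_cycle_hom {L L' : ℕ} [NeZero L'] (hL' : Odd L')
    (φ : ZMod L' → ZMod L) (hφ : ∀ i, φ (i + 1) = φ i + 1 ∨ φ i = φ (i + 1) + 1) : L ≤ L' := by
  by_contra! hlt
  have hε : ∀ i, ∃ ε : ℤ, (ε = 1 ∨ ε = -1) ∧ (ε : ZMod L) = φ (i + 1) - φ i := by
    intro i
    rcases hφ i with h | h
    · exact ⟨1, Or.inl rfl, by rw [h]; push_cast; ring⟩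
    · exact ⟨-1, Or.inr rfl, by rw [h]; push_cast; ring⟩
  choose ε hε1 hε2 using hε
  have hzero : ((∑ i, ε i : ℤ) : ZMod L) = 0 := by
    push_cast
    simp_rw [hε2]
    rw [Finset.sum_sub_distrib, sub_eq_zero]
    exact Equiv.sum_comp (Equiv.addRight (1 : ZMod L')) φ
  have hdvd := (ZMod.intCast_zmod_eq_zero_iff_dvd _ _).1 hzero
  have habs : |∑ i, ε i| ≤ L' := by
    refine (Finset.abs_sum_le_sum_abs _ _).trans ?_
    have : ∀ i ∈ (Finset.univ : Finset (ZMod L')), |ε i| ≤ 1 := by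
      intro i _
      rcases hε1 i with h | h <;> simp [h]
    simpa using Finset.sum_le_sum this
  have hsum : ∑ i, ε i = 0 :=
    Int.eq_zero_of_abs_lt_dvd hdvd (habs.trans_lt (by exact_mod_cast hlt))
  have hpar : ((∑ i, ε i : ℤ) : ZMod 2) = L' := by
    push_cast
    have : ∀ i, (ε i : ZMod 2) = 1 := by
      intro i
      rcases hε1 i with h | h <;> rw [h] <;> decide
    simp [this]
  rw [hsum, Int.cast_zero, (ZMod.natCast_eq_one_iff_odd).2 hL'] at hpar
  exact zero_ne_one hpar

theorem HasProfile.girth_le {V W : Type*} {m L h t m' L' h' t' : ℕ} [NeZero L'] (hL' : Odd L')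
    {G : SimpleGraph V} {H : SimpleGraph W} (hG : HasProfile m L h t G)
    (hH : HasProfile m' L' h' t' H) (hc : Contains G H) : L ≤ L' := by
  obtain ⟨f, hf⟩ := hc
  obtain ⟨c, hc⟩ := hG.coloring
  obtain ⟨z, hz⟩ := hH.cycle
  exact le_of_odd_cycle_hom hL' (fun i => c (f (z i))) fun i => hc _ _ (hf _ _ (hz i))

theorem HasProfile.maxDegree_le {V W : Type*} [Finite V] {m L h t m' L' h' t' : ℕ}
    {G : SimpleGraph V} {H : SimpleGraph W} (hG : HasProfile m L h t G)
    (hH : HasProfile m' L' h' t' H) (hc : Contains G H) : h' ≤ h := by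
  obtain ⟨f, hf⟩ := hc
  obtain ⟨v, hv⟩ := hH.le_degree
  refine hv.trans (le_trans ?_ (hG.degree_le (f v)))
  exact Nat.card_le_card_of_injective (fun w : H.neighborSet v => ⟨f w, hf _ _ w.2⟩)
    fun a b hab => Subtype.ext (f.injective (congrArg Subtype.val hab))

/-- The map on edges induced by a containment. -/
theorem Contains.exists_edgeSet_embedding {V W : Type*} {G : SimpleGraph V} {H : SimpleGraph W}
    (f : W ↪ V) (hf : ∀ a b, H.Adj a b → G.Adj (f a) (f b)) :
    ∃ g : H.edgeSet → G.edgeSet, Function.Injective g ∧ ∀ e, (g e : Sym2 V) = Sym2.map f e := by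
  let φ : H →g G := ⟨f, fun {a b} hab => hf a b hab⟩
  exact ⟨φ.mapEdgeSet, SimpleGraph.Hom.mapEdgeSet.injective φ f.injective, fun e => rfl⟩

theorem Contains.card_edgeSet_le {V W : Type*} [Finite V] {G : SimpleGraph V} {H : SimpleGraph W}
    (hc : Contains G H) : Nat.card H.edgeSet ≤ Nat.card G.edgeSet := by
  obtain ⟨f, hf⟩ := hc
  obtain ⟨g, hg, -⟩ := Contains.exists_edgeSet_embedding f hf
  exact Nat.card_le_card_of_injective g hg

theorem Contains.nonempty_iso {V : Type*} [Finite V] {G H : SimpleGraph V}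
    (hc : Contains G H) (he : Nat.card H.edgeSet = Nat.card G.edgeSet) : Nonempty (H ≃g G) := by
  obtain ⟨f, hf⟩ := hc
  obtain ⟨g, hg, hgf⟩ := Contains.exists_edgeSet_embedding f hf
  have hgs : Function.Surjective g := (hg.bijective_of_nat_card_le he.ge).2
  refine ⟨⟨Equiv.ofBijective f (Finite.injective_iff_bijective.1 f.injective), ?_⟩⟩
  intro a b
  refine ⟨fun hab => ?_, hf a b⟩
  obtain ⟨e, he⟩ := hgs ⟨s(f a, f b), hab⟩
  have h2 : Sym2.map f e = Sym2.map f s(a, b) := by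
    rw [← hgf e, he, Sym2.map_mk]
  have h3 := Sym2.map.injective f.injective h2
  have := e.2
  rwa [h3] at this

theorem SimpleGraph.exists_between_card_edgeSet {V : Type*} [Finite V] {G₁ G₂ : SimpleGraph V}
    (h : G₁ ≤ G₂) {m : ℕ} (h₁ : Nat.card G₁.edgeSet ≤ m) (h₂ : m ≤ Nat.card G₂.edgeSet) :
    ∃ G, G₁ ≤ G ∧ G ≤ G₂ ∧ Nat.card G.edgeSet = m := by
  classical
  have := Fintype.ofFinite V
  rw [Nat.card_eq_fintype_card, ← SimpleGraph.edgeFinset_card] at h₁ h₂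
  obtain ⟨E, hE₁, hE₂, hE⟩ :=
    Finset.exists_subsuperset_card_eq (SimpleGraph.edgeFinset_subset_edgeFinset.2 h) h₁ h₂
  have hedge : (SimpleGraph.fromEdgeSet (E : Set (Sym2 V))).edgeSet = E := by
    rw [SimpleGraph.edgeSet_fromEdgeSet]
    refine sdiff_eq_left.2 (Set.disjoint_left.2 fun e he hd => ?_)
    exact G₂.not_isDiag_of_mem_edgeSet (SimpleGraph.mem_edgeFinset.1 (hE₂ he)) hd
  refine ⟨SimpleGraph.fromEdgeSet (E : Set (Sym2 V)), ?_, ?_, ?_⟩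
  · rw [← SimpleGraph.edgeSet_subset_edgeSet, hedge]
    exact fun e he => hE₁ (SimpleGraph.mem_edgeFinset.2 he)
  · rw [← SimpleGraph.edgeSet_subset_edgeSet, hedge]
    exact fun e he => SimpleGraph.mem_edgeFinset.1 (hE₂ he)
  · rw [hedge, Nat.card_coe_set_eq, Set.ncard_coe_finset, hE]

/-- A vertex whose neighbours are values of `g` has degree at most the size of the domain of `g`. -/
theorem card_neighborSet_le_of_subset_range {V α : Type*} [Finite α] {G : SimpleGraph V} {v : V}
    (g : α → V) (hg : ∀ w, G.Adj v w → w ∈ Set.range g) :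
    Nat.card (G.neighborSet v) ≤ Nat.card α :=
  (Nat.card_mono (Set.finite_range g) hg).trans (Finite.card_range_le g)

theorem le_card_neighborSet_of_injective {V α : Type*} [Finite V] {G : SimpleGraph V} {v : V}
    (g : α → V) (hg : Function.Injective g) (hadj : ∀ a, G.Adj v (g a)) :
    Nat.card α ≤ Nat.card (G.neighborSet v) :=
  Nat.card_le_card_of_injective (fun a => (⟨g a, hadj a⟩ : G.neighborSet v))
    fun _ _ hab => hg (congrArg Subtype.val hab)

/-- The vertices of the construction: `cyc` spans a blow-up of the cycle of length `L`, `left` and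
`right` span a `d`-regular bipartite graph, `fill` carries the filler edges and `hub` is the vertex
of largest degree. -/
inductive Vtx (L t d s f : ℕ) : Type
  | cyc (i : ZMod L) (a : Fin t)
  | left (i : Fin d) (x : Fin s)
  | right (b : Fin d × Fin s)
  | fill (x : Fin f)
  | hub

namespace Vtx

variable {L t d s f h u : ℕ}

/-- The vertices as a disjoint union. -/
def equivSum : Vtx L t d s f ≃
    (ZMod L × Fin t) ⊕ (Fin d × Fin s) ⊕ (Fin d × Fin s) ⊕ Fin f ⊕ Unit where
  toFun
    | cyc i a => .inl (i, a)
    | left i x => .inr (.inl (i, x))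
    | right b => .inr (.inr (.inl b))
    | fill x => .inr (.inr (.inr (.inl x)))
    | hub => .inr (.inr (.inr (.inr ())))
  invFun
    | .inl (i, a) => cyc i a
    | .inr (.inl (i, x)) => left i x
    | .inr (.inr (.inl b)) => right b
    | .inr (.inr (.inr (.inl x))) => fill x
    | .inr (.inr (.inr (.inr ()))) => hub
  left_inv := by rintro (_ | _ | _ | _ | _) <;> rfl
  right_inv := by rintro (_ | _ | _ | _ | _) <;> rfl

instance [NeZero L] : Finite (Vtx L t d s f) := Finite.of_equiv _ equivSum.symm

theorem card_eq [NeZero L] : Nat.card (Vtx L t d s f) = L * t + 2 * (d * s) + f + 1 := by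
  rw [Nat.card_congr equivSum]
  simp only [Nat.card_sum, Nat.card_prod, Nat.card_zmod, Nat.card_fin, Nat.card_unique]
  ring

/-- The arcs of the construction; the parameter `u` bounds the number of filler arcs at a vertex. -/
inductive Arc (π : Fin d → Fin d → Equiv.Perm (Fin s)) (p : Fin f ↪ Fin d × Fin s)
    (q : Fin h ↪ Fin d × Fin s) (u : ℕ) : Vtx L t d s f → Vtx L t d s f → Prop
  | cyc (i : ZMod L) (a b : Fin t) : Arc π p q u (cyc i a) (cyc (i + 1) b)
  | free (i j : Fin d) (x : Fin s) : Arc π p q u (left i x) (right (j, π i j x))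
  | fill (x j : Fin f) (hj : j.val < u) : Arc π p q u (fill x) (right (p j))
  | hub (j : Fin h) : Arc π p q u hub (right (q j))

/-- The homomorphism to the cycle of length `L`. -/
def color : Vtx L t d s f → ZMod L
  | cyc i _ => i
  | left _ _ => 0
  | right _ => 1
  | fill _ => 0
  | hub => 0

variable {π : Fin d → Fin d → Equiv.Perm (Fin s)} {p : Fin f ↪ Fin d × Fin s}
  {q : Fin h ↪ Fin d × Fin s}

theorem Arc.color_eq {v w : Vtx L t d s f} (hvw : Arc π p q u v w) :
    color w = color v + 1 := by
  cases hvw <;> simp [color]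

/-- The graph whose edges are the arcs. -/
def graph (L t : ℕ) (π : Fin d → Fin d → Equiv.Perm (Fin s)) (p : Fin f ↪ Fin d × Fin s)
    (q : Fin h ↪ Fin d × Fin s) (u : ℕ) : SimpleGraph (Vtx L t d s f) :=
  SimpleGraph.fromRel (Arc π p q u)

theorem graph_adj (hL : 1 < L) {v w : Vtx L t d s f} :
    (graph L t π p q u).Adj v w ↔ Arc π p q u v w ∨ Arc π p q u w v := by
  have := Fact.mk hL
  rw [graph, SimpleGraph.fromRel_adj, and_iff_right_iff_imp]
  rintro (hvw | hvw) rfl <;> simpa using hvw.color_eq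

theorem graph_mono {u' : ℕ} (hu : u ≤ u') : graph L t π p q u ≤ graph L t π p q u' := by
  have key : ∀ v w : Vtx L t d s f, Arc π p q u v w → Arc π p q u' v w := by
    rintro v w (⟨i, a, b⟩ | ⟨i, j, x⟩ | ⟨x, j, hj⟩ | j)
    · exact .cyc i a b
    · exact .free i j x
    · exact .fill x j (hj.trans_le hu)
    · exact .hub j
  intro v w hvw
  exact ⟨hvw.1, hvw.2.imp (key _ _) (key _ _)⟩

theorem graph_adj_left_right (hL : 1 < L) {i j : Fin d} {x y : Fin s} :
    (graph L t π p q u).Adj (left i x) (right (j, y)) ↔ π i j x = y := by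
  rw [graph_adj hL]
  constructor
  · rintro (hvw | hvw)
    · cases hvw
      rfl
    · cases hvw
  · rintro rfl
    exact Or.inl (.free i j x)

theorem card_edgeSet_le [NeZero L] (hL : 1 < L) (htf : t ≤ f) :
    Nat.card (graph L t π p q t).edgeSet ≤ L * t ^ 2 + d ^ 2 * s + f * t + h := by
  let g : (ZMod L × Fin t × Fin t) ⊕ (Fin d × Fin d × Fin s) ⊕ (Fin f × Fin t) ⊕ Fin h →
      Sym2 (Vtx L t d s f)
    | .inl (i, a, b) => s(cyc i a, cyc (i + 1) b)
    | .inr (.inl (i, j, x)) => s(left i x, right (j, π i j x))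
    | .inr (.inr (.inl (x, j))) => s(fill x, right (p (j.castLE htf)))
    | .inr (.inr (.inr j)) => s(hub, right (q j))
  have harc : ∀ v w, Arc π p q t v w → s(v, w) ∈ Set.range g := by
    rintro v w (⟨i, a, b⟩ | ⟨i, j, x⟩ | ⟨x, j, hj⟩ | j)
    · exact ⟨.inl (i, a, b), rfl⟩
    · exact ⟨.inr (.inl (i, j, x)), rfl⟩
    · exact ⟨.inr (.inr (.inl (x, ⟨j, hj⟩))), rfl⟩
    · exact ⟨.inr (.inr (.inr j)), rfl⟩
  have hsub : (graph L t π p q t).edgeSet ⊆ Set.range g := by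
    intro e
    induction e with
    | h v w =>
      intro he
      rcases (graph_adj hL).1 he with hvw | hvw
      · exact harc _ _ hvw
      · rw [Sym2.eq_swap]
        exact harc _ _ hvw
  calc Nat.card (graph L t π p q t).edgeSet
      ≤ Nat.card (Set.range g) := Nat.card_mono (Set.toFinite _) hsub
    _ ≤ _ := Finite.card_range_le g
    _ = _ := by
      simp only [Nat.card_sum, Nat.card_prod, Nat.card_zmod, Nat.card_fin]
      ring

theorem sq_le_card_edgeSet [NeZero L] (hL : 1 < L) :
    f ^ 2 ≤ Nat.card (graph L t π p q f).edgeSet := by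
  let g : Fin f × Fin f → (graph L t π p q f).edgeSet := fun x =>
    ⟨s(fill x.1, right (p x.2)), (graph_adj hL).2 (Or.inl (.fill _ _ x.2.2))⟩
  have hg : Function.Injective g := by
    rintro ⟨x, j⟩ ⟨x', j'⟩ hx
    have := congrArg Subtype.val hx
    simpa [g] using this
  calc f ^ 2 = Nat.card (Fin f × Fin f) := by simp [sq]
    _ ≤ _ := Nat.card_le_card_of_injective g hg

theorem card_neighborSet_le [NeZero L] (hL : 1 < L) (hth : 2 * t ≤ h) (hdh : d + f + 1 ≤ h)
    (v : Vtx L t d s f) : Nat.card ((graph L t π p q f).neighborSet v) ≤ h := by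
  cases v with
  | cyc i a =>
    refine (card_neighborSet_le_of_subset_range (α := Fin t ⊕ Fin t)
      (Sum.elim (cyc (i + 1)) (cyc (i - 1))) ?_).trans (by simpa [two_mul] using hth)
    intro w hw
    rcases (graph_adj hL).1 hw with hw | hw
    · cases hw with
      | cyc _ _ b => exact ⟨.inl b, rfl⟩
    · generalize hz : cyc i a = z at hw
      cases hw with
      | cyc j b _ =>
        obtain ⟨rfl, -⟩ := cyc.inj hz
        exact ⟨.inr b, by simp⟩
      | _ => cases hz
  | left i x =>
    refine (card_neighborSet_le_of_subset_range (fun j => right (j, π i j x)) ?_).trans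
      (by simp; omega)
    intro w hw
    rcases (graph_adj hL).1 hw with hw | hw
    · cases hw with
      | free _ j _ => exact ⟨j, rfl⟩
    · cases hw
  | right b =>
    refine (card_neighborSet_le_of_subset_range (α := Fin d ⊕ Fin f ⊕ Unit)
      (Sum.elim (fun i => left i ((π i b.1).symm b.2)) (Sum.elim fill fun _ => hub)) ?_).trans
      (by simpa [add_assoc] using hdh)
    intro w hw
    rcases (graph_adj hL).1 hw with hw | hw
    · cases hw
    · cases hw with
      | free i j x => exact ⟨.inl i, by simp⟩
      | fill x j hj => exact ⟨.inr (.inl x), rfl⟩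
      | hub j => exact ⟨.inr (.inr ()), rfl⟩
  | fill x =>
    refine (card_neighborSet_le_of_subset_range (fun j => right (p j)) ?_).trans (by simp; omega)
    intro w hw
    rcases (graph_adj hL).1 hw with hw | hw
    · cases hw with
      | fill _ j _ => exact ⟨j, rfl⟩
    · cases hw
  | hub =>
    refine (card_neighborSet_le_of_subset_range (fun j => right (q j)) ?_).trans (by simp)
    intro w hw
    rcases (graph_adj hL).1 hw with hw | hw
    · cases hw with
      | hub j => exact ⟨j, rfl⟩
    · cases hw

theorem le_card_neighborSet_hub [NeZero L] (hL : 1 < L) :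
    h ≤ Nat.card ((graph L t π p q t).neighborSet hub) := by
  simpa using le_card_neighborSet_of_injective (G := graph L t π p q t) (v := hub)
    (fun j => right (q j)) (fun a b hab => q.injective (right.inj hab))
    fun j => (graph_adj hL).2 (Or.inl (.hub j))

theorem le_card_neighborSet [NeZero L] (hL : 1 < L) (htd : t ≤ d) (htf : t ≤ f) (hth : t ≤ h)
    (v : Vtx L t d s f) : t ≤ Nat.card ((graph L t π p q t).neighborSet v) := by
  cases v with
  | cyc i a =>
    simpa using le_card_neighborSet_of_injective (G := graph L t π p q t) (cyc (i + 1))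
      (fun a b hab => (cyc.inj hab).2) fun b => (graph_adj hL).2 (Or.inl (.cyc i a b))
  | left i x =>
    refine htd.trans ?_
    simpa using le_card_neighborSet_of_injective (G := graph L t π p q t)
      (fun j => right (j, π i j x)) (fun a b hab => (Prod.ext_iff.1 (right.inj hab)).1)
      fun j => (graph_adj hL).2 (Or.inl (.free i j x))
  | right b =>
    refine htd.trans ?_
    simpa using le_card_neighborSet_of_injective (G := graph L t π p q t) (v := right b)
      (fun i => left i ((π i b.1).symm b.2)) (fun _ _ hab => (left.inj hab).1)
      fun i => ((graph_adj_left_right hL).2 (by simp)).symm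
  | fill x =>
    simpa using le_card_neighborSet_of_injective (G := graph L t π p q t)
      (fun j : Fin t => right (p (j.castLE htf)))
      (fun a b hab => Fin.castLE_injective htf (p.injective (right.inj hab)))
      fun j => (graph_adj hL).2 (Or.inl (.fill x _ j.2))
  | hub => exact hth.trans (le_card_neighborSet_hub hL)

theorem hasProfile_of_between [NeZero L] (hL : 1 < L) (ht : 0 < t) (htd : t ≤ d) (htf : t ≤ f)
    (hth : 2 * t ≤ h) (hdh : d + f + 1 ≤ h) {m : ℕ} {G : SimpleGraph (Vtx L t d s f)}
    (h₁ : graph L t π p q t ≤ G) (h₂ : G ≤ graph L t π p q f) (hm : Nat.card G.edgeSet = m) :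
    HasProfile m L h t G where
  card_edgeSet := hm
  coloring := ⟨color, fun v w hvw => ((graph_adj hL).1 (h₂ hvw)).imp Arc.color_eq Arc.color_eq⟩
  cycle := ⟨fun i => cyc i ⟨0, ht⟩, fun i => h₁ ((graph_adj hL).2 (Or.inl (.cyc i _ _)))⟩
  degree_le v := (Nat.card_mono (Set.toFinite _) fun _ hw => h₂ hw).trans
    (card_neighborSet_le hL hth hdh v)
  le_degree := ⟨hub, (le_card_neighborSet_hub hL).trans
    (Nat.card_mono (Set.toFinite _) fun _ hw => h₁ hw)⟩
  minDegree v := (le_card_neighborSet hL htd htf (by omega) v).trans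
    (Nat.card_mono (Set.toFinite _) fun _ hw => h₁ hw)

end Vtx

/-- For suitable parameters there are at least `(s !) ^ (d ^ 2)` labelled graphs with a given
profile. -/
theorem exists_injective_hasProfile {m L t d s f h n : ℕ} (hL : 1 < L) (ht : 0 < t) (htd : t ≤ d)
    (htf : t ≤ f) (hth : 2 * t ≤ h) (hdh : d + f + 1 ≤ h) (hf : f ≤ d * s) (hh : h ≤ d * s)
    (hlow : L * t ^ 2 + d ^ 2 * s + f * t + h ≤ m) (hhigh : m ≤ f ^ 2)
    (hn : L * t + 2 * (d * s) + f + 1 = n) :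
    ∃ Φ : (Fin d → Fin d → Equiv.Perm (Fin s)) → SimpleGraph (Fin n),
      Function.Injective Φ ∧ ∀ π, HasProfile m L h t (Φ π) := by
  have : NeZero L := ⟨by omega⟩
  let p : Fin f ↪ Fin d × Fin s := (Fin.castLEEmb hf).trans finProdFinEquiv.symm.toEmbedding
  let q : Fin h ↪ Fin d × Fin s := (Fin.castLEEmb hh).trans finProdFinEquiv.symm.toEmbedding
  have hex (π : Fin d → Fin d → Equiv.Perm (Fin s)) :=
    SimpleGraph.exists_between_card_edgeSet (Vtx.graph_mono (L := L) (π := π) (p := p) (q := q) htf)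
      ((Vtx.card_edgeSet_le hL htf).trans hlow) (hhigh.trans (Vtx.sq_le_card_edgeSet hL))
  choose Γ h₁ h₂ hΓ using hex
  let e : Vtx L t d s f ≃ Fin n := Finite.equivFinOfCardEq (Vtx.card_eq.trans hn)
  refine ⟨fun π => (Γ π).map e.toEmbedding, ?_, fun π => ?_⟩
  · refine (SimpleGraph.map_injective _).comp fun π π' hππ => ?_
    funext i j
    ext1 x
    have hadj : (Γ π').Adj (.left i x) (.right (j, π i j x)) :=
      hππ ▸ h₁ π ((Vtx.graph_adj_left_right hL).2 rfl)
    exact ((Vtx.graph_adj_left_right hL).1 (h₂ π' hadj)).symm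
  · exact (Vtx.hasProfile_of_between hL ht htd htf hth hdh (h₁ π) (h₂ π) (hΓ π)).of_iso
      (SimpleGraph.Iso.map e _)

/-- The odd girth of the members with `m` edges. -/
def oddGirthParam (m : ℕ) : ℕ := 2 * m.sqrt + 3

/-- The maximum degree of the members with `m` edges. -/
def maxDegreeParam (m : ℕ) : ℕ := 2 * m.sqrt + 1 + ((m.sqrt + 1) ^ 2 - m)

/-- A lower bound for the minimum degree of the members with `m` edges. -/
noncomputable def minDegreeParam (m : ℕ) : ℕ := ⌊Real.log m⌋₊

/-- The number of vertices of the members with `m` edges. -/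
noncomputable def vertexParam (m : ℕ) : ℕ := ⌊m / Real.log m⌋₊

theorem exists_sizes {m k l n h : ℕ} (hl : 1 ≤ l) (hlk : 100 * l ≤ k) (hkn : 100 * (k * l ^ 2) ≤ n)
    (hlm : l * n ≤ m) (hkm : k ^ 2 ≤ m) (hmk : m < (k + 1) ^ 2)
    (hh : h = 2 * k + 1 + ((k + 1) ^ 2 - m)) :
    ∃ d s f : ℕ, d + 1 = 2 * l ∧ f ≤ k + 1 + 4 * l ∧
      d + f + 1 ≤ h ∧ 2 * l ≤ h ∧ f ≤ d * s ∧ h ≤ d * s ∧ l ≤ f ∧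
      (2 * k + 3) * l ^ 2 + d ^ 2 * s + f * l + h ≤ m ∧ m ≤ f ^ 2 ∧
      (2 * k + 3) * l + 2 * (d * s) + f + 1 = n := by
  obtain ⟨d, hd⟩ : ∃ d, d + 1 = 2 * l := ⟨2 * l - 1, by omega⟩
  have hkl : k * l ≤ k * l ^ 2 := Nat.mul_le_mul_left _ (Nat.le_self_pow two_ne_zero l)
  have hkl' : k ≤ k * l := Nat.le_mul_of_pos_right _ hl
  have hLl : (2 * k + 3) * l = 2 * (k * l) + 3 * l := by ring
  obtain ⟨r, hr⟩ : ∃ r, (2 * k + 3) * l + 1 + (k + 1) + r = n :=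
    ⟨n - ((2 * k + 3) * l + 1 + (k + 1)), by omega⟩
  have hmod : r % (2 * d) < 2 * d := Nat.mod_lt _ (by omega)
  have hdiv := Nat.div_add_mod r (2 * d)
  have hhk : h ≤ 4 * k + 2 := by
    have : (k + 1) ^ 2 = k ^ 2 + 2 * k + 1 := by ring
    omega
  have hhk' : 2 * k + 2 ≤ h := by omega
  generalize r / (2 * d) = s at hdiv
  generalize hρ : r % (2 * d) = ρ at hmod hdiv
  rw [mul_assoc] at hdiv
  have hds : 4 * k + 2 ≤ d * s := by omega
  refine ⟨d, s, ρ + (k + 1), hd, by omega, by omega, by omega, by omega, by omega, by omega, ?_,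
    ?_, ?_⟩
  · have h1 : 2 * (d ^ 2 * s) ≤ d * n := by
      have : 2 * (d * s) ≤ n := by omega
      calc 2 * (d ^ 2 * s) = d * (2 * (d * s)) := by ring
        _ ≤ d * n := Nat.mul_le_mul_left _ this
    have h2 : d * n + n = 2 * (l * n) := by rw [← mul_assoc, ← hd]; ring
    have h3 : (ρ + (k + 1)) * l ≤ (k + 1 + 4 * l) * l := Nat.mul_le_mul_right _ (by omega)
    have h4 : l * l ≤ k * l := Nat.mul_le_mul_right _ (by omega)
    have h5 : 2 * ((2 * k + 3) * l ^ 2 + (k + 1 + 4 * l) * l + (4 * k + 2)) ≤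
        100 * (k * l ^ 2) := by
      have h6 : l ^ 2 ≤ k * l ^ 2 := Nat.le_mul_of_pos_left _ (by omega)
      ring_nf at h4 h6 hkl hkl' ⊢
      omega
    omega
  · exact hmk.le.trans (Nat.pow_le_pow_left (by omega) 2)
  · rw [← hr, ← hdiv]
    ring

theorem exp_le_factorial (s : ℕ) (hs : 0 < s) :
    Real.exp (s * (Real.log s - 1)) ≤ (s.factorial : ℝ) := by
  have h1 := Real.pow_div_factorial_le_exp (s : ℝ) (Nat.cast_nonneg s) s
  have hs' : (0 : ℝ) < s := by exact_mod_cast hs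
  rw [div_le_iff₀ (by positivity)] at h1
  rw [mul_sub, mul_one, Real.exp_sub, div_le_iff₀ (Real.exp_pos _), mul_comm (s : ℝ),
    ← Real.rpow_def_of_pos hs', Real.rpow_natCast, mul_comm]
  exact h1

theorem entropy_bound {m d s n : ℕ} {w y z : ℝ} (hm : 0 < m) (hy : y = Real.log m)
    (hz : z = Real.log y) (hz10 : 10 ≤ z) (hw : w ^ 2 = m) (hwy : 1000 * y ^ 4 ≤ w)
    (hny : n * y ≤ m) (hd : (d : ℝ) ≤ 2 * y) (hd' : 2 * y - 3 ≤ d)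
    (hs : m / y - 1 - 10 * w * y ≤ 2 * (d * s)) :
    Real.exp (m * y - 10 * m * z) * n.factorial ≤ (s.factorial : ℝ) ^ (d ^ 2) := by
  have hy0 : 0 < y := by
    by_contra! hle
    have : y = 0 := le_antisymm hle (hy ▸ Real.log_natCast_nonneg m)
    rw [this, Real.log_zero] at hz
    linarith
  have hyz : 3 * z ≤ y ∧ 10 ≤ y := by
    have h1 := Real.quadratic_le_exp_of_nonneg (show 0 ≤ z by linarith)
    rw [hz, Real.exp_log hy0, ← hz] at h1
    constructor <;> nlinarith
  obtain ⟨hyz, hy10⟩ := hyz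
  have hm0 : (0 : ℝ) < m := by exact_mod_cast hm
  have hw0 : 0 < w := lt_of_lt_of_le (by positivity) hwy
  have hmw : 1000 * y ^ 3 * w ≤ m / y := by
    rw [le_div_iff₀ hy0, ← hw]
    nlinarith
  have hsmall : 1 + 10 * w * y ≤ m / y / (20 * y) := by
    rw [le_div_iff₀ (by positivity)]
    have h1 : 1 ≤ w * y := by
      have : 1 ≤ y ^ 4 := one_le_pow₀ (by linarith)
      nlinarith
    have h2 : w * y ^ 2 * 10 ≤ w * y ^ 2 * y := mul_le_mul_of_nonneg_left hy10 (by positivity)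
    nlinarith
  have hsmall' : 1 + 10 * w * y ≤ m / y / 2 := by
    refine hsmall.trans (div_le_div_of_nonneg_left (by positivity) two_pos (by linarith))
  have hs2 : m / (8 * y ^ 2) ≤ s := by
    rw [div_le_iff₀ (by positivity)]
    have h1 : m / y / 2 ≤ 2 * (2 * y * s) := by
      have : (d : ℝ) * s ≤ 2 * y * s := mul_le_mul_of_nonneg_right hd (Nat.cast_nonneg s)
      linarith
    rw [div_div, div_le_iff₀ (by positivity)] at h1
    linarith
  have hs0 : (0 : ℝ) < s := lt_of_lt_of_le (by positivity) hs2
  have hlogs : y - 3 * z ≤ Real.log s - 1 := by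
    have h1 := Real.log_le_log (by positivity) hs2
    rw [Real.log_div (by positivity) (by positivity), Real.log_mul (by norm_num) (by positivity),
      Real.log_pow, ← hy, ← hz] at h1
    have h2 : Real.log 8 ≤ 8 - 1 := Real.log_le_sub_one_of_pos (by norm_num)
    push_cast at h1
    linarith
  have hP : m - 3 * (m / y) ≤ (d : ℝ) ^ 2 * s := by
    have hA : 0 ≤ m / y - 1 - 10 * w * y := by
      have : 0 ≤ m / y := by positivity
      linarith
    have h1 : (2 * y - 3) * (m / y - 1 - 10 * w * y) ≤ d * (2 * (d * s)) :=
      mul_le_mul hd' hs hA (Nat.cast_nonneg d)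
    have h2 : y * (m / y) = m := by field_simp
    have h3 : y * (1 + 10 * w * y) ≤ m / y := by
      have := mul_le_mul_of_nonneg_left hsmall hy0.le
      have h4 : y * (m / y / (20 * y)) = m / y / 20 := by field_simp
      have : 0 ≤ m / y := by positivity
      linarith
    nlinarith
  have hmain : (m : ℝ) * y - 10 * m * z + m ≤ (d : ℝ) ^ 2 * s * (Real.log s - 1) := by
    have h1 : (m - 3 * (m / y)) * (y - 3 * z) ≤ (d : ℝ) ^ 2 * s * (Real.log s - 1) :=
      mul_le_mul hP hlogs (by linarith) (by positivity)
    have h2 : (m - 3 * (m / y)) * (y - 3 * z) = m * y - 3 * m - 3 * (m * z) + 9 * (m / y * z) := by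
      field_simp
      ring
    have h3 : 0 ≤ m / y * z := by positivity
    nlinarith
  have hnfac : (n.factorial : ℝ) ≤ Real.exp m := by
    rcases Nat.eq_zero_or_pos n with rfl | hn
    · simp
    · have hn0 : (0 : ℝ) < n := by exact_mod_cast hn
      have hnm : (n : ℝ) ≤ m := by nlinarith
      calc (n.factorial : ℝ) ≤ (n : ℝ) ^ n := by exact_mod_cast n.factorial_le_pow
        _ = Real.exp (n * Real.log n) := by rw [Real.exp_nat_mul, Real.exp_log hn0]
        _ ≤ Real.exp m := by
          refine Real.exp_le_exp.2 (le_trans ?_ hny)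
          rw [hy]
          exact mul_le_mul_of_nonneg_left (Real.log_le_log hn0 hnm) hn0.le
  calc Real.exp (m * y - 10 * m * z) * n.factorial
      ≤ Real.exp (m * y - 10 * m * z) * Real.exp m :=
        mul_le_mul_of_nonneg_left hnfac (Real.exp_pos _).le
    _ ≤ Real.exp ((d ^ 2 : ℕ) * (s * (Real.log s - 1))) := by
        rw [← Real.exp_add]
        refine Real.exp_le_exp.2 (hmain.trans_eq ?_)
        push_cast
        ring
    _ = Real.exp (s * (Real.log s - 1)) ^ (d ^ 2) := Real.exp_nat_mul _ _
    _ ≤ (s.factorial : ℝ) ^ (d ^ 2) :=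
        pow_le_pow_left₀ (Real.exp_pos _).le (exp_le_factorial s (by exact_mod_cast hs0)) _

/-- The growth conditions under which the construction works hold for all large `m`. -/
theorem eventually_growth : ∀ᶠ m : ℕ in atTop,
    10 ≤ Real.log (Real.log m) ∧ 1000 * Real.log m ^ 4 ≤ √(m : ℝ) := by
  have hlog : Tendsto (fun m : ℕ => Real.log m) atTop atTop :=
    Real.tendsto_log_atTop.comp tendsto_natCast_atTop_atTop
  refine ((Real.tendsto_log_atTop.comp hlog).eventually_ge_atTop 10).and ?_
  have h1 : (fun x : ℝ => Real.log x ^ 4) =o[atTop] fun x : ℝ => x ^ (1 / 2 : ℝ) := by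
    simpa using isLittleO_log_rpow_rpow_atTop (4 : ℝ) (show (0 : ℝ) < 1 / 2 by norm_num)
  have h2 := tendsto_natCast_atTop_atTop.eventually
    (h1.bound (show (0 : ℝ) < 1 / 1000 by norm_num))
  filter_upwards [h2] with m hm
  rw [Real.norm_of_nonneg (by positivity), Real.norm_of_nonneg (by positivity),
    ← Real.sqrt_eq_rpow] at hm
  linarith

theorem ten_le_log_of_ten_le_log_log {m : ℕ} (hz : 10 ≤ Real.log (Real.log m)) :
    10 ≤ Real.log m := by
  have hy0 : 0 < Real.log m := by
    refine lt_of_le_of_ne (Real.log_natCast_nonneg m) fun h => ?_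
    rw [← h, Real.log_zero] at hz
    linarith
  have := Real.log_le_sub_one_of_pos hy0
  linarith

/-- For large `m` there are many labelled graphs with the profile prescribed by the parameters. -/
theorem exists_many_hasProfile {m : ℕ} (hz : 10 ≤ Real.log (Real.log m))
    (hw : 1000 * Real.log m ^ 4 ≤ √(m : ℝ)) :
    ∃ (d s : ℕ) (Φ : (Fin d → Fin d → Equiv.Perm (Fin s)) → SimpleGraph (Fin (vertexParam m))),
      Function.Injective Φ ∧
      (∀ π, HasProfile m (oddGirthParam m) (maxDegreeParam m) (minDegreeParam m) (Φ π)) ∧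
      Real.exp (m * Real.log m - 10 * m * Real.log (Real.log m)) * (vertexParam m).factorial ≤
        (s.factorial : ℝ) ^ (d ^ 2) := by
  have hy := ten_le_log_of_ten_le_log_log hz
  have hm : 0 < m := by
    rcases Nat.eq_zero_or_pos m with rfl | h
    · norm_num at hy
    · exact h
  have hw2 : √(m : ℝ) ^ 2 = m := Real.sq_sqrt (Nat.cast_nonneg m)
  have hl1 : (minDegreeParam m : ℝ) ≤ Real.log m := Nat.floor_le (by linarith)
  have hl2 : Real.log m < minDegreeParam m + 1 := Nat.lt_floor_add_one _
  have hn1 : (vertexParam m : ℝ) ≤ m / Real.log m := Nat.floor_le (by positivity)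
  have hn2 : m / Real.log m < vertexParam m + 1 := Nat.lt_floor_add_one _
  have hk1 : (m.sqrt : ℝ) ≤ √(m : ℝ) := Real.nat_sqrt_le_real_sqrt
  have hk2 : √(m : ℝ) ≤ m.sqrt + 1 := Real.real_sqrt_le_nat_sqrt_succ
  unfold oddGirthParam
  generalize hln : minDegreeParam m = l at *
  generalize vertexParam m = n at *
  generalize hk : m.sqrt = k at *
  generalize √(m : ℝ) = w at *
  generalize hyn : Real.log m = y at *
  have hw0 : 0 < w := lt_of_lt_of_le (by positivity) hw
  have hny : n * y ≤ m := by rwa [le_div_iff₀ (by linarith)] at hn1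
  have hmw : 1000 * y ^ 3 * w ≤ m / y := by
    rw [le_div_iff₀ (by linarith), ← hw2]
    nlinarith
  have hy4 : y ≤ y ^ 4 := le_self_pow₀ (by linarith) (by norm_num)
  have hl0 : (1 : ℝ) ≤ l := by linarith
  have hlk : (100 : ℝ) * l ≤ k := by linarith
  have hlsq : (l : ℝ) ^ 2 ≤ y ^ 2 := pow_le_pow_left₀ (by linarith) hl1 2
  have hkn : (100 : ℝ) * (k * l ^ 2) ≤ n := by
    have h1 : (k : ℝ) * l ^ 2 ≤ w * y ^ 2 := mul_le_mul hk1 hlsq (by positivity) hw0.le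
    have h2 : w * y ^ 2 * 10 ≤ w * y ^ 2 * y := mul_le_mul_of_nonneg_left hy (by positivity)
    have h3 : 1 ≤ w * y ^ 2 := by
      have : 1 ≤ y ^ 2 := one_le_pow₀ (by linarith)
      nlinarith
    nlinarith
  have hlm : (l : ℝ) * n ≤ m := by
    have : (l : ℝ) * n ≤ y * n := mul_le_mul_of_nonneg_right hl1 (Nat.cast_nonneg n)
    linarith
  obtain ⟨d, s, f, hdl, hfk, hdh, hlh, hf, hh, hlf, hlow, hhigh, hsize⟩ :=
    exists_sizes (m := m) (k := k) (l := l) (n := n) (h := maxDegreeParam m)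
      (by exact_mod_cast hl0) (by exact_mod_cast hlk) (by exact_mod_cast hkn)
      (by exact_mod_cast hlm) (hk ▸ Nat.sqrt_le' m) (hk ▸ Nat.lt_succ_sqrt' m)
      (by rw [maxDegreeParam, hk])
  have hl0' : 1 ≤ l := by exact_mod_cast hl0
  obtain ⟨Φ, hΦ, hprof⟩ := exists_injective_hasProfile (L := 2 * k + 3) (t := l) (by omega) hl0'
    (by omega) hlf hlh hdh hf hh hlow hhigh hsize
  refine ⟨d, s, Φ, hΦ, hprof, ?_⟩
  have hdl' : (d : ℝ) + 1 = 2 * l := by exact_mod_cast hdl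
  refine entropy_bound hm hyn.symm rfl hz hw2 hw hny (by linarith) (by linarith) ?_
  have hsize' : (2 * (k : ℝ) + 3) * l + 2 * (d * s) + f + 1 = n := by exact_mod_cast hsize
  have hfk' : (f : ℝ) ≤ k + 1 + 4 * l := by exact_mod_cast hfk
  have h1 : (k : ℝ) * l ≤ w * y := mul_le_mul hk1 hl1 (by positivity) hw0.le
  have h2 : w * 10 ≤ w * y := mul_le_mul_of_nonneg_left hy hw0.le
  nlinarith

/-- Isomorphism of graphs on a fixed vertex type. -/
def isoSetoid (V : Type*) : Setoid (SimpleGraph V) where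
  r G H := Nonempty (G ≃g H)
  iseqv := ⟨fun _ => ⟨.refl⟩, fun ⟨e⟩ => ⟨e.symm⟩, fun ⟨e⟩ ⟨e'⟩ => ⟨e.trans e'⟩⟩

/-- An isomorphism class of graphs on `n` labelled vertices has at most `n !` members. -/
theorem card_iso_le_factorial {n : ℕ} (G : SimpleGraph (Fin n)) :
    Nat.card {H : SimpleGraph (Fin n) // Nonempty (G ≃g H)} ≤ n.factorial := by
  let g : Equiv.Perm (Fin n) → {H : SimpleGraph (Fin n) // Nonempty (G ≃g H)} := fun σ =>
    ⟨G.comap σ, ⟨(SimpleGraph.Iso.comap σ G).symm⟩⟩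
  have hg : Function.Surjective g := by
    rintro ⟨H, ⟨e⟩⟩
    refine ⟨e.symm.toEquiv, Subtype.ext (SimpleGraph.ext ?_)⟩
    ext a b
    exact e.symm.map_adj_iff
  calc _ ≤ Nat.card (Equiv.Perm (Fin n)) := Nat.card_le_card_of_surjective g hg
    _ = n.factorial := by simp [Fintype.card_perm]

/-- A family of labelled graphs meets at least a `1 / n !` fraction of its size in isomorphism
classes. -/
theorem card_le_card_classes_mul_factorial {n : ℕ} {α : Type*} [Finite α]
    {P : SimpleGraph (Fin n) → Prop}
    (hP : ∀ G H, Nonempty (G ≃g H) → P G → P H) (Φ : α → SimpleGraph (Fin n))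
    (hΦ : Function.Injective Φ) (hPΦ : ∀ a, P (Φ a)) :
    Nat.card α ≤ Nat.card {q : Quotient (isoSetoid (Fin n)) // P q.out} * n.factorial := by
  classical
  have := Fintype.ofFinite α
  have := Fintype.ofFinite {q : Quotient (isoSetoid (Fin n)) // P q.out}
  let _ := isoSetoid (Fin n)
  have hout (G : SimpleGraph (Fin n)) : Nonempty ((Quotient.mk _ G).out ≃g G) :=
    Quotient.mk_out (s := isoSetoid (Fin n)) G
  let g : α → {q : Quotient (isoSetoid (Fin n)) // P q.out} := fun a =>
    ⟨Quotient.mk _ (Φ a), hP _ _ ((hout (Φ a)).map SimpleGraph.Iso.symm) (hPΦ a)⟩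
  rw [Nat.card_eq_fintype_card, Nat.card_eq_fintype_card, mul_comm, ← Finset.card_univ,
    ← Finset.card_univ]
  refine Finset.card_le_mul_card_image_of_maps_to (f := g) (fun _ _ => Finset.mem_univ _) _ ?_
  rintro q -
  refine le_trans ?_ (card_iso_le_factorial q.1.out)
  rw [← Fintype.card_coe, ← Nat.card_eq_fintype_card]
  refine Nat.card_le_card_of_injective (fun a => ⟨Φ a.1, ?_⟩) fun a b hab =>
    Subtype.ext (hΦ (congrArg Subtype.val hab))
  have ha : g a.1 = q := (Finset.mem_filter.1 a.2).2
  exact (congrArg (fun q' => Nonempty (Quotient.out q'.1 ≃g Φ a.1)) ha).mp (hout (Φ a.1))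

theorem card_graphs_le {n m : ℕ} :
    Nat.card {G : SimpleGraph (Fin n) // Nat.card G.edgeSet = m} ≤ ((n + 1).choose 2).choose m := by
  classical
  let g : {G : SimpleGraph (Fin n) // Nat.card G.edgeSet = m} →
      Finset.powersetCard m (Finset.univ : Finset (Sym2 (Fin n))) := fun G =>
    ⟨G.1.edgeFinset, Finset.mem_powersetCard.2 ⟨Finset.subset_univ _, by
      rw [SimpleGraph.edgeFinset_card, ← Nat.card_eq_fintype_card, G.2]⟩⟩
  have hg : Function.Injective g := fun G H hGH =>
    Subtype.ext (SimpleGraph.edgeFinset_inj.1 (congrArg Subtype.val hGH))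
  refine (Nat.card_le_card_of_injective g hg).trans_eq ?_
  rw [Nat.card_eq_fintype_card, Fintype.card_coe, Finset.card_powersetCard, Finset.card_univ,
    Sym2.card, Fintype.card_fin]

theorem choose_le_exp {n m : ℕ} (hy : 2 ≤ Real.log m) (hn : n * Real.log m ≤ m) :
    (((n + 1).choose 2).choose m : ℝ) ≤ Real.exp (m * Real.log m) := by
  have hm : (0 : ℝ) < m := by
    rcases Nat.eq_zero_or_pos m with rfl | h
    · norm_num at hy
    · exact_mod_cast h
  have hN : ((n + 1).choose 2 : ℝ) ≤ (n : ℝ) ^ 2 := by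
    have : (n + 1).choose 2 ≤ n ^ 2 := by
      rw [Nat.choose_two_right, Nat.add_sub_cancel]
      refine Nat.div_le_of_le_mul ?_
      nlinarith [Nat.le_self_pow two_ne_zero n]
    exact_mod_cast this
  have hn2 : 4 * (n : ℝ) ^ 2 ≤ m ^ 2 := by
    have : 2 * (n : ℝ) ≤ m := by nlinarith [(Nat.cast_nonneg n : (0 : ℝ) ≤ n)]
    nlinarith [(Nat.cast_nonneg n : (0 : ℝ) ≤ n)]
  have hfac : (0 : ℝ) < m.factorial := by exact_mod_cast m.factorial_pos
  have hexp := Real.pow_div_factorial_le_exp (m : ℝ) hm.le m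
  rw [div_le_iff₀ hfac] at hexp
  calc (((n + 1).choose 2).choose m : ℝ)
      ≤ ((n + 1).choose 2 : ℝ) ^ m / m.factorial := Nat.choose_le_pow_div _ _
    _ ≤ ((m : ℝ) * m / 4) ^ m / m.factorial := by
        gcongr
        linarith
    _ ≤ (m : ℝ) ^ m := by
        rw [div_le_iff₀ hfac]
        have h4 : Real.exp m ≤ 4 ^ m := by
          have : Real.exp 1 ≤ 4 := by linarith [Real.exp_one_lt_d9]
          calc Real.exp m = Real.exp 1 ^ m := by rw [← Real.exp_nat_mul, mul_one]
            _ ≤ 4 ^ m := pow_le_pow_left₀ (Real.exp_pos _).le this m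
        have h5 : (m : ℝ) ^ m ≤ 4 ^ m * m.factorial := hexp.trans (by gcongr)
        calc ((m : ℝ) * m / 4) ^ m = (m : ℝ) ^ m * ((m : ℝ) ^ m / 4 ^ m) := by
              rw [mul_div_assoc, mul_pow, div_pow]
          _ ≤ (m : ℝ) ^ m * m.factorial := by
              gcongr
              rw [div_le_iff₀ (by positivity)]
              linarith
    _ = Real.exp (m * Real.log m) := by rw [Real.exp_nat_mul, Real.exp_log hm]

/-- The profile prescribed for members with `m` edges. -/
def HasParamProfile {V : Type*} (m : ℕ) (G : SimpleGraph V) : Prop :=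
  HasProfile m (oddGirthParam m) (maxDegreeParam m) (minDegreeParam m) G

theorem HasParamProfile.eq_of_contains {V W : Type*} [Finite V] {m m' : ℕ} {G : SimpleGraph V}
    {H : SimpleGraph W} (hG : HasParamProfile m G) (hH : HasParamProfile m' H)
    (hc : Contains G H) : m' = m := by
  have hle : m' ≤ m := by
    rw [← hG.card_edgeSet, ← hH.card_edgeSet]
    exact hc.card_edgeSet_le
  have hodd : Odd (oddGirthParam m') := ⟨m'.sqrt + 1, by rw [oddGirthParam]; ring⟩
  have : NeZero (oddGirthParam m') := ⟨by rw [oddGirthParam]; omega⟩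
  have hgirth := hG.girth_le hodd hH hc
  have hdeg := hG.maxDegree_le hH hc
  have hsqrt : m'.sqrt = m.sqrt := by
    refine le_antisymm (Nat.sqrt_le_sqrt hle) ?_
    unfold oddGirthParam at hgirth
    omega
  unfold maxDegreeParam at hdeg
  rw [hsqrt] at hdeg
  have := Nat.lt_succ_sqrt' m
  rw [Nat.succ_eq_add_one] at this
  omega

/-- One graph from each isomorphism class with the right number of vertices and profile. -/
def antichain : Set ((n : ℕ) × SimpleGraph (Fin n)) :=
  {G | ∃ m, ∃ q : Quotient (isoSetoid (Fin (vertexParam m))),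
    HasParamProfile m q.out ∧ G = ⟨vertexParam m, q.out⟩}

theorem antichain_eq_of_contains {G H : (n : ℕ) × SimpleGraph (Fin n)} (hG : G ∈ antichain)
    (hH : H ∈ antichain) (hc : Contains G.2 H.2) : G = H := by
  obtain ⟨m, q, hq, rfl⟩ := hG
  obtain ⟨m', q', hq', rfl⟩ := hH
  obtain rfl := hq.eq_of_contains hq' hc
  have hiso : Nonempty (q'.out ≃g q.out) :=
    hc.nonempty_iso (hq'.card_edgeSet.trans hq.card_edgeSet.symm)
  obtain rfl : q' = q := Quotient.out_equiv_out.1 hiso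
  rfl

theorem card_antichain_fiber (m : ℕ) :
    Nat.card {G ∈ antichain | Nat.card G.2.edgeSet = m} =
      Nat.card {q : Quotient (isoSetoid (Fin (vertexParam m))) // HasParamProfile m q.out} := by
  refine (Nat.card_congr (Equiv.ofBijective (fun q => ⟨⟨vertexParam m, q.1.out⟩,
    ⟨m, q.1, q.2, rfl⟩, q.2.card_edgeSet⟩) ⟨fun q q' hqq => ?_, ?_⟩)).symm
  · have := congrArg Subtype.val hqq
    exact Subtype.ext (Quotient.out_injective (eq_of_heq (Sigma.mk.inj this).2))
  · rintro ⟨G, ⟨m', q, hq, rfl⟩, hm⟩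
    obtain rfl : m' = m := hq.card_edgeSet.symm.trans hm
    exact ⟨⟨q, hq⟩, rfl⟩

/-- There is an antichain `𝒜` of (pairwise non-isomorphic) finite graphs and a constant `C > 0`
such that for all sufficiently large `m`, the number of members of `𝒜` with `m` edges is between
`exp(m log m - C m log log m)` and `exp(m log m + C m log log m)`, every member with `m` edges has
`m / log m + O(1)` vertices, and every member with `m` edges has minimum degree at least
`max 1 (log m / C)`. -/
theorem stmt1 :
    ∃ (𝒜 : Set ((n : ℕ) × SimpleGraph (Fin n))) (C : ℝ), 0 < C ∧
      (∀ G ∈ 𝒜, ∀ H ∈ 𝒜, G ≠ H → ¬ Nonempty (G.2 ≃g H.2)) ∧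
      (∀ G ∈ 𝒜, ∀ H ∈ 𝒜, Contains G.2 H.2 → G = H) ∧
      ∀ᶠ m : ℕ in atTop,
        (Real.exp (m * Real.log m - C * m * Real.log (Real.log m)) ≤
            (Nat.card {G ∈ 𝒜 | Nat.card G.2.edgeSet = m} : ℝ)) ∧
        ((Nat.card {G ∈ 𝒜 | Nat.card G.2.edgeSet = m} : ℝ) ≤
            Real.exp (m * Real.log m + C * m * Real.log (Real.log m))) ∧
        (∀ G ∈ 𝒜, Nat.card G.2.edgeSet = m →
          |(G.1 : ℝ) - m / Real.log m| ≤ C ∧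
          ∀ v : Fin G.1, max 1 (Real.log m / C) ≤ (Nat.card (G.2.neighborSet v) : ℝ)) := by
  refine ⟨antichain, 10, by norm_num, ?_, fun G hG H hH hc => antichain_eq_of_contains hG hH hc, ?_⟩
  · rintro G hG H hH hne ⟨e⟩
    exact hne (antichain_eq_of_contains hG hH
      ⟨e.symm.toEmbedding.toEmbedding, fun a b hab => e.symm.map_adj_iff.2 hab⟩)
  filter_upwards [eventually_growth] with m hm
  obtain ⟨hz, hw⟩ := hm
  have hy := ten_le_log_of_ten_le_log_log hz
  have hn1 : (vertexParam m : ℝ) ≤ m / Real.log m := Nat.floor_le (by positivity)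
  have hn2 : m / Real.log m < vertexParam m + 1 := Nat.lt_floor_add_one _
  have hl2 : Real.log m < minDegreeParam m + 1 := Nat.lt_floor_add_one _
  refine ⟨?_, ?_, ?_⟩
  · rw [card_antichain_fiber]
    obtain ⟨d, s, Φ, hΦ, hprof, hbound⟩ := exists_many_hasProfile hz hw
    have hcard := card_le_card_classes_mul_factorial (P := HasParamProfile m)
      (fun G H ⟨e⟩ hG => hG.of_iso e) Φ hΦ hprof
    have hperm : Nat.card (Fin d → Fin d → Equiv.Perm (Fin s)) = s.factorial ^ (d ^ 2) := by
      simp [Fintype.card_perm, sq, pow_mul]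
    rw [hperm] at hcard
    have hfac : (0 : ℝ) < (vertexParam m).factorial := by
      exact_mod_cast (vertexParam m).factorial_pos
    refine le_of_mul_le_mul_right (hbound.trans ?_) hfac
    exact_mod_cast hcard
  · rw [card_antichain_fiber]
    have hcard : Nat.card {q : Quotient (isoSetoid (Fin (vertexParam m))) //
        HasParamProfile m q.out} ≤ (((vertexParam m) + 1).choose 2).choose m :=
      (Nat.card_le_card_of_injective (fun q => (⟨q.1.out, q.2.card_edgeSet⟩ :
        {G : SimpleGraph (Fin (vertexParam m)) // Nat.card G.edgeSet = m}))
        fun q q' hqq => Subtype.ext (Quotient.out_injective (congrArg Subtype.val hqq))).trans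
        card_graphs_le
    refine (Nat.cast_le.2 hcard).trans ((choose_le_exp (by linarith) ?_).trans ?_)
    · rwa [le_div_iff₀ (by linarith)] at hn1
    · refine Real.exp_le_exp.2 (le_add_of_nonneg_right ?_)
      positivity
  · rintro G ⟨m', q, hq, rfl⟩ hm
    obtain rfl : m' = m := hq.card_edgeSet.symm.trans hm
    refine ⟨abs_le.2 ⟨by linarith, by linarith⟩, fun v => ?_⟩
    have hdeg : (minDegreeParam m' : ℝ) ≤ Nat.card (q.out.neighborSet v) := by
      exact_mod_cast hq.minDegree v
    exact max_le (by linarith) (by linarith)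
end

section
/- For every non-empty family 𝓕 of finite graphs, each having at least one edge, there exists a constant C such that sat(n,𝓕) ≤ C·n for every integer n ≥ 1. -/
open SimpleGraph Filter Topology

/-- A family of finite graphs, each given on a vertex set `Fin n`. -/
abbrev GraphFam := Set ((n : ℕ) × SimpleGraph (Fin n))

/-- `G` is `𝓕`-saturated: `G` contains no member of `𝓕`, but adding any missing edge to `G`
creates a member of `𝓕`. -/
def FamSaturated (𝓕 : GraphFam) {α : Type*} (G : SimpleGraph α) : Prop :=
  (∀ F ∈ 𝓕, ¬ Contains G F.2) ∧
    ∀ u v : α, u ≠ v → ¬ G.Adj u v →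
      ∃ F ∈ 𝓕, Contains (G ⊔ SimpleGraph.fromEdgeSet {s(u, v)}) F.2

/-- `sat n 𝓕` is the minimum number of edges in an `𝓕`-saturated graph on `n` vertices. -/
noncomputable def sat (n : ℕ) (𝓕 : GraphFam) : ℕ :=
  sInf {m | ∃ G : SimpleGraph (Fin n), FamSaturated 𝓕 G ∧ Nat.card G.edgeSet = m}

/-- A graph with a vertex cover `S` embeds into any graph with disjoint vertex sets `T` and `N`,
at least as large as `S` and its complement, such that every vertex of `T` is adjacent to all
other vertices of `T ∪ N`. -/
lemma contains_of_vertexCover {α β : Type*} [Fintype β] [DecidableEq β]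
    {G : SimpleGraph α} {H : SimpleGraph β} {S : Finset β} {T N : Finset α}
    (hS : ∀ a b, H.Adj a b → a ∈ S ∨ b ∈ S) (hTN : Disjoint T N)
    (hT : S.card ≤ T.card) (hN : Sᶜ.card ≤ N.card)
    (hTT : ∀ t ∈ T, ∀ w ∈ T, t ≠ w → G.Adj t w) (hTN' : ∀ t ∈ T, ∀ w ∈ N, G.Adj t w) :
    Contains G H := by
  classical
  obtain ⟨e⟩ : Nonempty (S ↪ T) := Function.Embedding.nonempty_of_card_le (by simpa using hT)
  obtain ⟨g⟩ : Nonempty ((Sᶜ : Finset β) ↪ N) :=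
    Function.Embedding.nonempty_of_card_le (by simpa only [Fintype.card_coe] using hN)
  let f : β → α := fun x =>
    if hx : x ∈ S then (e ⟨x, hx⟩ : α) else (g ⟨x, Finset.mem_compl.2 hx⟩ : α)
  have f_mem : ∀ x ∈ S, f x ∈ T := fun x hx => by simp [f, hx]
  have f_notMem : ∀ x ∉ S, f x ∈ N := fun x hx => by simp [f, hx]
  have f_inj : Function.Injective f := by
    intro x y hxy
    by_cases hx : x ∈ S <;> by_cases hy : y ∈ S
    · simpa [f, hx, hy, Subtype.ext_iff] using hxy
    · exact absurd (hxy ▸ f_notMem y hy) (Finset.disjoint_left.1 hTN (f_mem x hx))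
    · exact absurd (hxy ▸ f_notMem x hx) (Finset.disjoint_left.1 hTN (f_mem y hy))
    · simpa [f, hx, hy, Subtype.ext_iff] using hxy
  have f_adj : ∀ a b, a ∈ S → a ≠ b → G.Adj (f a) (f b) := by
    intro a b ha hab
    by_cases hb : b ∈ S
    · exact hTT _ (f_mem a ha) _ (f_mem b hb) (f_inj.ne hab)
    · exact hTN' _ (f_mem a ha) _ (f_notMem b hb)
  refine ⟨⟨f, f_inj⟩, fun a b hab => ?_⟩
  rcases hS a b hab with ha | hb
  · exact f_adj a b ha hab.ne
  · exact (f_adj b a hb hab.ne').symm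

/-- Every graph on a finite vertex set containing no member of `𝓕` extends to an
`𝓕`-saturated graph. -/
lemma exists_famSaturated_ge (𝓕 : GraphFam) {α : Type*} [Finite α] {G₀ : SimpleGraph α}
    (h : ∀ F ∈ 𝓕, ¬ Contains G₀ F.2) : ∃ G, G₀ ≤ G ∧ FamSaturated 𝓕 G := by
  obtain ⟨G, hle, hG⟩ :=
    Finite.exists_le_maximal (p := fun G : SimpleGraph α => ∀ F ∈ 𝓕, ¬ Contains G F.2) h
  refine ⟨G, hle, hG.prop, fun u v huv hadj => ?_⟩
  by_contra! hfree
  exact hadj (hG.le_of_ge hfree le_sup_left (by simp [huv]))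

/-- The complete split graph on `Fin n`: the first `u` vertices are joined to all others. -/
def splitGraph (n u : ℕ) : SimpleGraph (Fin n) where
  Adj a b := a ≠ b ∧ (a.val < u ∨ b.val < u)
  symm := ⟨fun _ _ h => ⟨h.1.symm, h.2.symm⟩⟩
  loopless := ⟨fun _ h => h.1 rfl⟩

/-- The number of vertices of `Fin n` below `u` is at most `u`. -/
lemma card_filter_val_lt_le (n u : ℕ) :
    (Finset.univ.filter fun a : Fin n => a.val < u).card ≤ u := by
  simp [Fin.card_filter_val_lt]

/-- A graph contained in `splitGraph n u` has a vertex cover of size at most `u`. -/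
lemma exists_vertexCover_of_contains_splitGraph {n u : ℕ} {β : Type*} [Fintype β]
    {H : SimpleGraph β} (h : Contains (splitGraph n u) H) :
    ∃ S : Finset β, S.card ≤ u ∧ ∀ a b, H.Adj a b → a ∈ S ∨ b ∈ S := by
  obtain ⟨f, hf⟩ := h
  refine ⟨Finset.univ.filter fun x => (f x).val < u, ?_, fun a b hab => ?_⟩
  · refine le_trans ?_ (card_filter_val_lt_le n u)
    exact Finset.card_le_card_of_injOn f (by intro x; simp) f.injective.injOn
  · simpa using (hf a b hab).2

/-- If `H` has a vertex cover of size `u + 1`, then in a supergraph of `splitGraph n u` not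
containing `H`, the vertices outside the first `u` have bounded degree. -/
lemma degree_le_of_splitGraph_le {n u : ℕ} {β : Type*} [Fintype β] {H : SimpleGraph β}
    {S : Finset β} (hS : ∀ a b, H.Adj a b → a ∈ S ∨ b ∈ S) (hcard : S.card = u + 1)
    {G : SimpleGraph (Fin n)} [DecidableRel G.Adj] (hle : splitGraph n u ≤ G)
    (hfree : ¬ Contains G H) {v : Fin n} (hv : u ≤ v.val) :
    G.degree v ≤ u + Fintype.card β := by
  classical
  set A := Finset.univ.filter fun a : Fin n => a.val < u with hA
  set N := (G.neighborFinset v).filter fun a => u ≤ a.val with hN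
  have hNcard : N.card < Fintype.card β := by
    by_contra! hlarge
    refine hfree (contains_of_vertexCover (T := insert v A) (N := N) hS ?_ ?_
      ((Finset.card_le_univ _).trans hlarge) ?_ ?_)
    · rw [Finset.disjoint_left]
      intro a ha haN
      simp only [hA, hN, Finset.mem_insert, Finset.mem_filter, Finset.mem_univ, true_and,
        mem_neighborFinset] at ha haN
      rcases ha with rfl | ha
      · exact G.loopless.irrefl _ haN.1
      · omega
    · have hAcard : A.card = u := by
        rw [hA, Fin.card_filter_val_lt]
        exact min_eq_right (hv.trans v.isLt.le)
      rw [Finset.card_insert_of_notMem (by simp [hA, hv]), hAcard, hcard]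
    · intro t ht w hw htw
      refine hle ⟨htw, ?_⟩
      simp only [hA, Finset.mem_insert, Finset.mem_filter, Finset.mem_univ, true_and] at ht hw
      rcases ht with rfl | ht
      · exact Or.inr (hw.resolve_left htw.symm)
      · exact Or.inl ht
    · intro t ht w hw
      simp only [hA, hN, Finset.mem_insert, Finset.mem_filter, Finset.mem_univ, true_and,
        mem_neighborFinset] at ht hw
      rcases ht with rfl | ht
      · exact hw.1
      · exact hle ⟨by rintro rfl; omega, Or.inl ht⟩
  have hsub : G.neighborFinset v ⊆ A ∪ N := by
    intro a ha
    simp only [hA, hN, Finset.mem_union, Finset.mem_filter, Finset.mem_univ, true_and]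
    exact (lt_or_ge a.val u).imp_right fun h => ⟨ha, h⟩
  calc G.degree v = (G.neighborFinset v).card := (G.card_neighborFinset_eq_degree v).symm
    _ ≤ A.card + N.card := (Finset.card_le_card hsub).trans (Finset.card_union_le _ _)
    _ ≤ u + Fintype.card β := add_le_add (card_filter_val_lt_le n u) hNcard.le

/-- A graph on `Fin n` whose vertices outside the first `u` have degree at most `d` has at most
`(u + d) * n` edges. -/
lemma card_edgeSet_le_of_degree_le {n u d : ℕ} (G : SimpleGraph (Fin n)) [DecidableRel G.Adj]
    (h : ∀ v : Fin n, u ≤ v.val → G.degree v ≤ d) : Nat.card G.edgeSet ≤ (u + d) * n := by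
  have hedges : Nat.card G.edgeSet = G.edgeFinset.card := by
    rw [Nat.card_eq_fintype_card, edgeFinset_card]
  have hdeg : ∀ v : Fin n, G.degree v ≤ (if v.val < u then n else 0) + d := by
    intro v
    split_ifs with hv
    · have := G.degree_lt_card_verts v
      rw [Fintype.card_fin] at this
      omega
    · simpa using h v (not_lt.1 hv)
  have hsum : ∑ v, G.degree v ≤ (u + d) * n := by
    calc ∑ v, G.degree v ≤ ∑ v : Fin n, ((if v.val < u then n else 0) + d) :=
          Finset.sum_le_sum fun v _ => hdeg v
      _ = (Finset.univ.filter fun a : Fin n => a.val < u).card * n + n * d := by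
          rw [Finset.sum_add_distrib, ← Finset.sum_filter]
          simp
      _ ≤ u * n + n * d := by gcongr; exact card_filter_val_lt_le n u
      _ = (u + d) * n := by ring
  have := G.sum_degrees_eq_twice_card_edges
  omega

/-- `sat(n,𝓕) = O(n)`: for every non-empty family of graphs each having at least one edge,
there is a constant `C` with `sat(n,𝓕) ≤ C·n` for all `n ≥ 1`. -/
theorem stmt2 (𝓕 : GraphFam) (h1 : 𝓕.Nonempty) (h2 : ∀ F ∈ 𝓕, 1 ≤ Nat.card F.2.edgeSet) :
    ∃ C : ℝ, ∀ n : ℕ, 1 ≤ n → (sat n 𝓕 : ℝ) ≤ C * n := by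
  classical
  have hex : ∃ k, ∃ F ∈ 𝓕, ∃ S : Finset (Fin F.1),
      S.card = k ∧ ∀ a b, F.2.Adj a b → a ∈ S ∨ b ∈ S := by
    obtain ⟨F, hF⟩ := h1
    exact ⟨_, F, hF, Finset.univ, rfl, by simp⟩
  obtain ⟨F, hF, S, hcard, hS⟩ := Nat.find_spec hex
  have hmin := fun k => Nat.find_min hex (m := k)
  obtain ⟨u, hu⟩ : ∃ u, Nat.find hex = u + 1 := by
    refine Nat.exists_eq_add_one_of_ne_zero fun h0 => ?_
    rw [h0, Finset.card_eq_zero] at hcard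
    have hbot : F.2 = ⊥ := by
      ext a b
      simpa [hcard] using hS a b
    have := h2 F hF
    simp [hbot] at this
  rw [hu] at hcard hmin
  refine ⟨(u + (u + F.1) : ℕ), fun n _ => ?_⟩
  obtain ⟨G, hle, hG⟩ := exists_famSaturated_ge 𝓕 (G₀ := splitGraph n u) fun F' hF' hcon => by
    obtain ⟨S', hS'card, hS'⟩ := exists_vertexCover_of_contains_splitGraph hcon
    exact hmin _ (Nat.lt_succ_of_le hS'card) ⟨F', hF', S', rfl, hS'⟩
  have hsat : sat n 𝓕 ≤ Nat.card G.edgeSet := Nat.sInf_le ⟨G, hG, rfl⟩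
  have hbound : Nat.card G.edgeSet ≤ (u + (u + F.1)) * n :=
    card_edgeSet_le_of_degree_le G fun v hv => by
      simpa using degree_le_of_splitGraph_le hS hcard hle (hG.1 F hF) hv
  exact_mod_cast hsat.trans hbound
end

section
/- For every integer ℓ ≥ 0, let g_ℓ denote the number of isomorphism classes of finite graphs with exactly ℓ edges and no isolated vertices. Then for every non-empty family 𝓕 of finite graphs, each having at least one edge, and every integer m ≥ 0, the set {n ∈ ℤ_{≥0} : sat(n,𝓕) = m} is the union of at most 2·(g_0 + g_1 + ⋯ + g_m) intervals. -/
open SimpleGraph Filter Topology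

/-- An interval of non-negative integers. -/
def IsIntervalN (I : Set ℕ) : Prop := ∀ a b c : ℕ, a ≤ b → b ≤ c → a ∈ I → c ∈ I → b ∈ I

/-- `numClasses ℓ` is the number of isomorphism classes of finite graphs with exactly `ℓ` edges
and no isolated vertices. -/
noncomputable def numClasses (ℓ : ℕ) : ℕ :=
  Nat.card (Quot (fun (G H : {G : (n : ℕ) × SimpleGraph (Fin n) //
      Nat.card G.2.edgeSet = ℓ ∧ ∀ v, (G.2.neighborSet v).Nonempty}) =>
    Nonempty (G.1.2 ≃g H.1.2)))

/-- Finite graphs with exactly `ℓ` edges and no isolated vertices. -/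
abbrev CoreGraph (ℓ : ℕ) : Type :=
  {G : (n : ℕ) × SimpleGraph (Fin n) //
    Nat.card G.2.edgeSet = ℓ ∧ ∀ v, (G.2.neighborSet v).Nonempty}

/-- Isomorphism classes of finite graphs with exactly `ℓ` edges and no isolated vertices. -/
abbrev CoreClass (ℓ : ℕ) : Type :=
  Quot (fun G H : CoreGraph ℓ => Nonempty (G.1.2 ≃g H.1.2))

/-- The orders `N` for which `H` together with `N - h` isolated vertices is `𝓕`-saturated. -/
def satOrders (𝓕 : GraphFam) {h : ℕ} (H : SimpleGraph (Fin h)) : Set ℕ :=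
  {N | ∃ f : Fin h ↪ Fin N, FamSaturated 𝓕 (H.map f)}

theorem exists_embedding_extending {h N M : ℕ} (hNM : N ≤ M) (f : Fin h ↪ Fin N)
    (g : Fin h ↪ Fin M) (T : Finset (Fin M)) (hgT : ∀ i, g i ∈ T) (hT : T.card ≤ N) :
    ∃ φ : Fin N ↪ Fin M, f.trans φ = g ∧ ∀ t ∈ T, ∃ x, φ x = t := by
  classical
  obtain ⟨T', hTT', hT'⟩ := Finset.exists_superset_card_eq hT (by simpa using hNM)
  rcases Nat.eq_zero_or_pos h with rfl | hpos
  · let e : Fin N ≃ T' := Fintype.equivOfCardEq (by simp [hT'])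
    refine ⟨e.toEmbedding.trans (Function.Embedding.subtype _), ?_, ?_⟩
    · ext i
      exact i.elim0
    · intro t ht
      exact ⟨e.symm ⟨t, hTT' ht⟩, by simp⟩
  · have : Nonempty (Fin h) := ⟨⟨0, hpos⟩⟩
    let k : Fin N → Fin M := fun x => g (Function.invFun f x)
    have hk : ∀ i, k (f i) = g i := fun i => by
      simp only [k, Function.leftInverse_invFun f.injective i]
    obtain ⟨e, he⟩ := Finset.exists_equiv_extend_of_card_eq (t := T')
      (s := Finset.univ.map f) (f := k) (by simp [hT'])
      (by
        intro y hy
        simp only [Finset.mem_image, Finset.mem_map, Finset.mem_univ, true_and] at hy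
        obtain ⟨_, ⟨i, rfl⟩, rfl⟩ := hy
        rw [hk]
        exact hTT' (hgT i))
      (by
        intro x hx y hy hxy
        simp only [Finset.coe_map, Finset.coe_univ, Set.image_univ, Set.mem_range] at hx hy
        obtain ⟨i, rfl⟩ := hx
        obtain ⟨j, rfl⟩ := hy
        rw [hk, hk] at hxy
        rw [g.injective hxy])
    refine ⟨e.toEmbedding.trans (Function.Embedding.subtype _), ?_, ?_⟩
    · ext i
      have := he (f i) (by simp)
      simp [this, hk]
    · intro t ht
      exact ⟨e.symm ⟨t, hTT' ht⟩, by simp⟩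

theorem Contains.map_embedding {α β γ : Type*} {G : SimpleGraph α} {F : SimpleGraph γ}
    (hc : Contains G F) (φ : α ↪ β) {G' : SimpleGraph β}
    (hG : ∀ x y, G.Adj x y → G'.Adj (φ x) (φ y)) : Contains G' F := by
  obtain ⟨f, hf⟩ := hc
  exact ⟨f.trans φ, fun a b hab => hG _ _ (hf a b hab)⟩

/-- Freeness passes from larger to smaller orders and the saturation condition from smaller to
larger ones, as long as two isolated vertices are available. -/
theorem famSaturated_map_of_between {𝓕 : GraphFam} {h a b c : ℕ} {H : SimpleGraph (Fin h)}
    (hab : a ≤ b) (hbc : b ≤ c) (ha : h + 2 ≤ a) {f : Fin h ↪ Fin a} {k : Fin h ↪ Fin c}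
    (hf : FamSaturated 𝓕 (H.map f)) (hk : FamSaturated 𝓕 (H.map k)) (g : Fin h ↪ Fin b) :
    FamSaturated 𝓕 (H.map g) := by
  classical
  refine ⟨fun F hF hc => ?_, fun u v huv hadj => ?_⟩
  · obtain ⟨φ, rfl, -⟩ := exists_embedding_extending hbc g k (Finset.univ.map k) (by simp)
      (by simp; omega)
    refine hk.1 F hF (hc.map_embedding φ ?_)
    rintro x y hxy
    rw [Function.Embedding.coe_trans, ← SimpleGraph.map_map]
    exact (SimpleGraph.map_adj_apply).2 hxy
  · obtain ⟨φ, rfl, hφ⟩ := exists_embedding_extending hab f g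
      (insert u (insert v (Finset.univ.map g))) (by simp) (by
        have h₁ := Finset.card_insert_le u (insert v (Finset.univ.map g))
        have h₂ := Finset.card_insert_le v (Finset.univ.map g)
        simp only [Finset.card_map, Finset.card_univ, Fintype.card_fin] at h₂
        omega)
    obtain ⟨x, rfl⟩ := hφ u (by simp)
    obtain ⟨y, rfl⟩ := hφ v (by simp)
    rw [Function.Embedding.coe_trans, ← SimpleGraph.map_map] at hadj ⊢
    obtain ⟨F, hF, hc⟩ := hf.2 x y (fun e => huv (by rw [e]))
      (fun e => hadj (SimpleGraph.map_adj_apply.2 e))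
    refine ⟨F, hF, hc.map_embedding φ ?_⟩
    intro p q hpq
    simp only [SimpleGraph.sup_adj, SimpleGraph.fromEdgeSet_adj, Set.mem_singleton_iff] at hpq ⊢
    refine hpq.imp (fun e => SimpleGraph.map_adj_apply.2 e) (fun e => ⟨?_, ?_⟩)
    · simpa using congrArg (Sym2.map φ) e.1
    · exact fun e' => e.2 (φ.injective e')

theorem isIntervalN_satOrders_inter_Ici (𝓕 : GraphFam) {h : ℕ} (H : SimpleGraph (Fin h)) :
    IsIntervalN (satOrders 𝓕 H ∩ Set.Ici (h + 2)) := by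
  rintro a b c hab hbc ⟨⟨f, hf⟩, ha⟩ ⟨⟨k, hk⟩, -⟩
  simp only [Set.mem_Ici] at ha
  exact ⟨⟨Fin.castLEEmb (by omega), famSaturated_map_of_between hab hbc ha hf hk _⟩,
    by simp only [Set.mem_Ici]; omega⟩

theorem le_of_mem_satOrders {𝓕 : GraphFam} {h N : ℕ} {H : SimpleGraph (Fin h)}
    (hN : N ∈ satOrders 𝓕 H) : h ≤ N := by
  obtain ⟨f, -⟩ := hN
  simpa using Fintype.card_le_of_embedding f

theorem isIntervalN_satOrders_inter_Iio (𝓕 : GraphFam) {h : ℕ} (H : SimpleGraph (Fin h)) :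
    IsIntervalN (satOrders 𝓕 H ∩ Set.Iio (h + 2)) := by
  rintro a b c hab hbc ha hc
  have h₁ := le_of_mem_satOrders ha.1
  have h₂ := hc.2
  simp only [Set.mem_Iio] at h₂
  rcases (by omega : b = a ∨ b = c) with rfl | rfl
  · exact ha
  · exact hc

theorem exists_isIntervalN_pair (𝓕 : GraphFam) {h : ℕ} (H : SimpleGraph (Fin h)) :
    ∃ I : Bool → Set ℕ, (∀ b, IsIntervalN (I b)) ∧ satOrders 𝓕 H = ⋃ b, I b := by
  refine ⟨fun b => bif b then satOrders 𝓕 H ∩ Set.Iio (h + 2)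
    else satOrders 𝓕 H ∩ Set.Ici (h + 2), ?_, ?_⟩
  · rintro (_ | _)
    · exact isIntervalN_satOrders_inter_Ici 𝓕 H
    · exact isIntervalN_satOrders_inter_Iio 𝓕 H
  · ext n
    simp only [Set.mem_iUnion, Bool.exists_bool, cond_true, cond_false, Set.mem_inter_iff,
      Set.mem_Ici, Set.mem_Iio, ← and_or_left]
    exact ⟨fun hn => ⟨hn, le_or_gt _ _⟩, fun hn => hn.1⟩

theorem satOrders_subset_of_iso (𝓕 : GraphFam) {h k : ℕ} {H : SimpleGraph (Fin h)}
    {K : SimpleGraph (Fin k)} (e : H ≃g K) : satOrders 𝓕 H ⊆ satOrders 𝓕 K := by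
  rintro N ⟨f, hf⟩
  refine ⟨e.symm.toEquiv.toEmbedding.trans f, ?_⟩
  have hK : K.map e.symm.toEquiv.toEmbedding = H := by
    ext x y
    simp only [SimpleGraph.map_adj]
    constructor
    · rintro ⟨u, v, huv, rfl, rfl⟩
      exact e.symm.map_adj_iff.2 huv
    · intro hxy
      exact ⟨e x, e y, e.map_adj_iff.2 hxy, e.symm_apply_apply x, e.symm_apply_apply y⟩
  rwa [Function.Embedding.coe_trans, ← SimpleGraph.map_map, hK]

theorem card_edgeSet_map {α β : Type*} (G : SimpleGraph α) (f : α ↪ β) :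
    Nat.card (G.map f).edgeSet = Nat.card G.edgeSet := by
  rw [SimpleGraph.edgeSet_map]
  exact Nat.card_image_of_injective f.sym2Map.injective _

/-- Every finite graph arises from one without isolated vertices by adding isolated vertices. -/
theorem exists_core {n : ℕ} (G : SimpleGraph (Fin n)) :
    ∃ (h : ℕ) (H : SimpleGraph (Fin h)) (f : Fin h ↪ Fin n),
      (∀ v, (H.neighborSet v).Nonempty) ∧ H.map f = G := by
  classical
  let e : Fin (Nat.card G.support) ≃ G.support := (Finite.equivFin _).symm
  let f : Fin (Nat.card G.support) ↪ Fin n :=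
    e.toEmbedding.trans (Function.Embedding.subtype _)
  have hf : ∀ x ∈ G.support, ∃ i, f i = x := fun x hx => ⟨e.symm ⟨x, hx⟩,
    congrArg Subtype.val (e.apply_symm_apply ⟨x, hx⟩)⟩
  refine ⟨_, G.comap f, f, fun v => ?_, ?_⟩
  · obtain ⟨w, hw⟩ := (SimpleGraph.mem_support G).1 (e v).2
    obtain ⟨i, rfl⟩ := hf w ((SimpleGraph.mem_support G).2 ⟨_, hw.symm⟩)
    exact ⟨i, hw⟩
  · ext x y
    simp only [SimpleGraph.map_adj, SimpleGraph.comap_adj]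
    constructor
    · rintro ⟨u, v, huv, rfl, rfl⟩
      exact huv
    · intro hxy
      obtain ⟨i, rfl⟩ := hf x ((SimpleGraph.mem_support G).2 ⟨_, hxy⟩)
      obtain ⟨j, rfl⟩ := hf y ((SimpleGraph.mem_support G).2 ⟨_, hxy.symm⟩)
      exact ⟨i, j, hxy, rfl, rfl⟩

theorem order_le_two_mul_card_edgeSet {n : ℕ} (G : SimpleGraph (Fin n))
    (hG : ∀ v, (G.neighborSet v).Nonempty) : n ≤ 2 * Nat.card G.edgeSet := by
  classical
  have hsum := G.sum_degrees_eq_twice_card_edges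
  have hdeg : ∀ v, 1 ≤ G.degree v := fun v => by
    obtain ⟨w, hw⟩ := hG v
    exact (G.degree_pos_iff_exists_adj v).2 ⟨w, hw⟩
  have hle : ∑ _v : Fin n, 1 ≤ ∑ v, G.degree v := Finset.sum_le_sum fun v _ => hdeg v
  rw [Nat.card_eq_fintype_card, ← SimpleGraph.edgeFinset_card]
  simp only [Finset.sum_const, Finset.card_univ, Fintype.card_fin, smul_eq_mul, mul_one] at hle
  omega

instance finite_coreGraph (ℓ : ℕ) : Finite (CoreGraph ℓ) := by
  refine Finite.of_injective (β := (n : Fin (2 * ℓ + 1)) × SimpleGraph (Fin n))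
    (fun G => ⟨⟨G.1.1, ?_⟩, G.1.2⟩) ?_
  · have := order_le_two_mul_card_edgeSet G.1.2 G.2.2
    have := G.2.1
    omega
  · rintro ⟨⟨n, G⟩, hG⟩ ⟨⟨k, K⟩, hK⟩ hGK
    simp only [Sigma.mk.injEq, Fin.mk.injEq] at hGK
    obtain ⟨rfl, hGK⟩ := hGK
    obtain rfl := eq_of_heq hGK
    rfl

theorem exists_famSaturated (𝓕 : GraphFam) (h2 : ∀ F ∈ 𝓕, 1 ≤ Nat.card F.2.edgeSet) (n : ℕ) :
    ∃ G : SimpleGraph (Fin n), FamSaturated 𝓕 G := by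
  classical
  obtain ⟨G, hG⟩ := (Set.toFinite {G : SimpleGraph (Fin n) | ∀ F ∈ 𝓕, ¬ Contains G F.2}
    ).exists_maximal ⟨⊥, by
      rintro F hF ⟨f, hf⟩
      obtain ⟨⟨e, he⟩⟩ := (Nat.card_pos_iff.1 (h2 F hF)).1
      induction e with
      | _ a b => exact hf a b he⟩
  refine ⟨G, hG.prop, fun u v huv hadj => ?_⟩
  by_contra hcon
  push Not at hcon
  exact hadj (hG.le_of_ge (y := G ⊔ SimpleGraph.fromEdgeSet {s(u, v)}) hcon le_sup_left
    (by simp [huv]))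

theorem sat_eq_iff (𝓕 : GraphFam) (h2 : ∀ F ∈ 𝓕, 1 ≤ Nat.card F.2.edgeSet) (n m : ℕ) :
    sat n 𝓕 = m ↔
      (∃ G : SimpleGraph (Fin n), FamSaturated 𝓕 G ∧ Nat.card G.edgeSet = m) ∧
        ∀ ℓ < m, ¬ ∃ G : SimpleGraph (Fin n), FamSaturated 𝓕 G ∧ Nat.card G.edgeSet = ℓ := by
  obtain ⟨G₀, hG₀⟩ := exists_famSaturated 𝓕 h2 n
  have hne : {m | ∃ G : SimpleGraph (Fin n), FamSaturated 𝓕 G ∧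
      Nat.card G.edgeSet = m}.Nonempty := ⟨_, G₀, hG₀, rfl⟩
  constructor
  · rintro rfl
    exact ⟨Nat.sInf_mem hne, fun ℓ hℓ hmem => Nat.notMem_of_lt_sInf hℓ hmem⟩
  · rintro ⟨hm, hlt⟩
    refine le_antisymm (Nat.sInf_le hm) ?_
    by_contra! hcon
    exact hlt _ hcon (Nat.sInf_mem hne)

/-- The orders admitting a saturated graph with `ℓ` edges are covered by two intervals per
isomorphism class of cores. -/
theorem exists_intervals_of_card (𝓕 : GraphFam) (ℓ : ℕ) :
    ∃ I : CoreClass ℓ × Bool → Set ℕ, (∀ i, IsIntervalN (I i)) ∧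
      ∀ n, (∃ G : SimpleGraph (Fin n), FamSaturated 𝓕 G ∧ Nat.card G.edgeSet = ℓ) ↔
        ∃ i, n ∈ I i := by
  let S : CoreClass ℓ → Set ℕ := Quot.lift (fun G => satOrders 𝓕 G.1.2) fun G H ⟨e⟩ =>
    Set.Subset.antisymm (satOrders_subset_of_iso 𝓕 e) (satOrders_subset_of_iso 𝓕 e.symm)
  have hS : ∀ q : CoreClass ℓ, ∃ I : Bool → Set ℕ,
      (∀ b, IsIntervalN (I b)) ∧ S q = ⋃ b, I b := fun q =>
    Quot.inductionOn q fun G => exists_isIntervalN_pair 𝓕 G.1.2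
  choose I hI hSI using hS
  refine ⟨fun i => I i.1 i.2, fun i => hI _ _, fun n => ?_⟩
  have hmem : (∃ i : CoreClass ℓ × Bool, n ∈ I i.1 i.2) ↔ ∃ q, n ∈ S q := by
    simp only [hSI, Set.mem_iUnion, Prod.exists]
  rw [hmem]
  constructor
  · rintro ⟨G, hG, hcard⟩
    obtain ⟨h, H, f, hH, rfl⟩ := exists_core G
    exact ⟨Quot.mk _ ⟨⟨h, H⟩, by rw [← hcard, card_edgeSet_map], hH⟩, f, hG⟩
  · rintro ⟨q, hq⟩
    induction q using Quot.inductionOn with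
    | _ H =>
      obtain ⟨f, hf⟩ := hq
      exact ⟨_, hf, by rw [card_edgeSet_map, H.2.1]⟩

/-- If every left endpoint of a run of `D` is some `P i`, then `D` is a union of intervals
indexed by `i`. -/
theorem exists_intervals_of_starts {ι : Type*} (D : Set ℕ) (P : ι → ℕ)
    (hP : ∀ s ∈ D, (∀ t, t + 1 = s → t ∉ D) → ∃ i, P i = s) :
    ∃ f : ι → Set ℕ, (∀ i, IsIntervalN (f i)) ∧ D = ⋃ i, f i := by
  refine ⟨fun i => {x | P i ≤ x ∧ ∀ y, P i ≤ y → y ≤ x → y ∈ D}, ?_, ?_⟩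
  · rintro i a b c hab hbc ⟨ha, -⟩ ⟨-, hc⟩
    exact ⟨ha.trans hab, fun y hy hyb => hc y hy (hyb.trans hbc)⟩
  · have hrun : ∀ x ∈ D, ∃ i, P i ≤ x ∧ ∀ y, P i ≤ y → y ≤ x → y ∈ D := by
      intro x
      induction x with
      | zero =>
        intro hx
        obtain ⟨i, hi⟩ := hP 0 hx (by simp)
        refine ⟨i, hi.le, fun y _ hy => ?_⟩
        rwa [Nat.le_zero.1 hy]
      | succ x ih =>
        intro hx
        by_cases hxD : x ∈ D
        · obtain ⟨i, hi, hiD⟩ := ih hxD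
          refine ⟨i, by omega, fun y hy hyx => ?_⟩
          rcases Nat.le_or_eq_of_le_succ hyx with hyx | rfl
          · exact hiD y hy hyx
          · exact hx
        · obtain ⟨i, hi⟩ := hP (x + 1) hx (by
            intro t ht
            obtain rfl : t = x := by omega
            exact hxD)
          refine ⟨i, hi.le, fun y hy hyx => ?_⟩
          rwa [show y = x + 1 by omega]
    ext x
    simp only [Set.mem_iUnion, Set.mem_ofPred_eq]
    exact ⟨hrun x, fun ⟨i, hi, hiD⟩ => hiD x hi le_rfl⟩

theorem IsIntervalN.sInf_eq {I : Set ℕ} (hI : IsIntervalN I) {s : ℕ} (hs : s ∈ I)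
    (hpred : ∀ t, t + 1 = s → t ∉ I) : sInf I = s := by
  refine le_antisymm (Nat.sInf_le hs) ?_
  by_contra! hlt
  exact hpred (s - 1) (by omega)
    (hI (sInf I) (s - 1) s (by omega) (by omega) (Nat.sInf_mem ⟨s, hs⟩) hs)

theorem IsIntervalN.sSup_eq {I : Set ℕ} (hI : IsIntervalN I) {t : ℕ} (ht : t ∈ I)
    (hsucc : t + 1 ∉ I) : sSup I = t := by
  refine IsGreatest.csSup_eq ⟨ht, fun x hx => ?_⟩
  by_contra! hlt
  exact hsucc (hI t (t + 1) x (by omega) hlt ht hx)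

/-- For every non-empty family `𝓕` of graphs each having at least one edge and every `m`,
the set `{n : sat(n,𝓕) = m}` is the union of at most `2·(g_0 + ⋯ + g_m)` intervals, where
`g_ℓ` is the number of isomorphism classes of graphs with `ℓ` edges and no isolated vertices. -/
theorem stmt3 (𝓕 : GraphFam) (h1 : 𝓕.Nonempty) (h2 : ∀ F ∈ 𝓕, 1 ≤ Nat.card F.2.edgeSet)
    (m : ℕ) :
    ∃ f : Fin (2 * ∑ ℓ ∈ Finset.range (m + 1), numClasses ℓ) → Set ℕ,
      (∀ i, IsIntervalN (f i)) ∧ {n : ℕ | sat n 𝓕 = m} = ⋃ i, f i := by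
  choose I hI hmem using exists_intervals_of_card 𝓕
  let ι := (ℓ : Fin (m + 1)) × (CoreClass ℓ × Bool)
  have hcard : Nat.card ι = 2 * ∑ ℓ ∈ Finset.range (m + 1), numClasses ℓ := by
    rw [Nat.card_sigma, Finset.mul_sum, ← Fin.sum_univ_eq_sum_range]
    refine Finset.sum_congr rfl fun ℓ _ => ?_
    rw [Nat.card_prod, Nat.card_eq_fintype_card (α := Bool), Fintype.card_bool, mul_comm]
    rfl
  let e : Fin (2 * ∑ ℓ ∈ Finset.range (m + 1), numClasses ℓ) ≃ ι :=
    (Finite.equivFinOfCardEq hcard).symm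
  let P : ι → ℕ := fun i => if (i.1 : ℕ) = m then sInf (I i.1 i.2) else sSup (I i.1 i.2) + 1
  refine exists_intervals_of_starts _ (P ∘ e) fun s hs hstart => ?_
  suffices hP : ∃ i, P i = s by
    obtain ⟨i, hi⟩ := hP
    exact ⟨e.symm i, by simpa using hi⟩
  simp only [Set.mem_ofPred_eq, sat_eq_iff 𝓕 h2, hmem] at hs hstart
  obtain ⟨⟨i, hi⟩, hlow⟩ := hs
  by_cases hpred : ∃ t, t + 1 = s ∧ t ∈ I m i
  · obtain ⟨t, rfl, ht⟩ := hpred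
    have hcut := hstart t rfl
    push Not at hcut
    obtain ⟨ℓ, hℓ, j, hj⟩ := hcut ⟨i, ht⟩
    refine ⟨⟨⟨ℓ, by omega⟩, j⟩, ?_⟩
    simp only [P, hℓ.ne, if_false]
    rw [(hI ℓ j).sSup_eq hj fun h => hlow ℓ hℓ ⟨j, h⟩]
  · push Not at hpred
    refine ⟨⟨⟨m, by omega⟩, i⟩, ?_⟩
    simp only [P, if_true]
    exact (hI m i).sInf_eq hi hpred
end

section
/- Let (s_n)_{n ≥ 0} be a sequence of integers such that: there is a constant C with s_n ≤ C·n for all n ≥ 1; s_{n+1} ≥ s_n for all sufficiently large n; and s_n → ∞ as n → ∞. Then there exists a non-empty family 𝓕 of finite graphs, each having at least one edge, such that sat(n,𝓕) = s_n for all sufficiently large n. -/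
open SimpleGraph Filter Topology

theorem Contains.trans {α β γ : Type*} {A : SimpleGraph α} {B : SimpleGraph β}
    {D : SimpleGraph γ} (hAB : Contains A B) (hBD : Contains B D) : Contains A D := by
  obtain ⟨f, hf⟩ := hAB
  obtain ⟨g, hg⟩ := hBD
  exact ⟨g.trans f, fun a b h => hf _ _ (hg _ _ h)⟩

theorem Contains.mono {α β : Type*} {A A' : SimpleGraph α} {B : SimpleGraph β}
    (h : Contains A B) (hle : A ≤ A') : Contains A' B := by
  obtain ⟨f, hf⟩ := h
  exact ⟨f, fun a b hab => hle (hf a b hab)⟩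

theorem Contains.refl {α : Type*} (A : SimpleGraph α) : Contains A A :=
  ⟨Function.Embedding.refl α, fun _ _ h => h⟩

theorem Contains.card_edgeSet_le_s6 {α β : Type*} {A : SimpleGraph α} {B : SimpleGraph β}
    [Finite A.edgeSet] (h : Contains A B) : Nat.card B.edgeSet ≤ Nat.card A.edgeSet := by
  obtain ⟨f, hf⟩ := h
  let φ : B →g A := ⟨f, fun {a b} h => hf a b h⟩
  exact Nat.card_le_card_of_injective _ (Hom.mapEdgeSet.injective φ f.injective)

/-- The graph obtained from `X` by adding `t` pairwise adjacent vertices joined to all of `X`. -/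
def hubJoin (t : ℕ) {W : Type*} (X : SimpleGraph W) : SimpleGraph (Fin t ⊕ W) where
  Adj
    | .inl i, .inl j => i ≠ j
    | .inl _, .inr _ => True
    | .inr _, .inl _ => True
    | .inr x, .inr y => X.Adj x y
  symm := ⟨by rintro (i | x) (j | y) <;> simp [SimpleGraph.adj_comm, eq_comm]⟩
  loopless := ⟨by rintro (i | x) <;> simp⟩

theorem hubJoin_adj_inl {t : ℕ} {W : Type*} {X : SimpleGraph W} {i : Fin t} {z : Fin t ⊕ W} :
    (hubJoin t X).Adj (.inl i) z ↔ z ≠ .inl i := by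
  rcases z with j | x <;> simp [hubJoin, eq_comm]

theorem hubJoin_adj_inr {t : ℕ} {W : Type*} {X : SimpleGraph W} {x y : W} :
    (hubJoin t X).Adj (.inr x) (.inr y) ↔ X.Adj x y := Iff.rfl

theorem hubJoin_adj_inr_inl {t : ℕ} {W : Type*} {X : SimpleGraph W} {x : W} {i : Fin t} :
    (hubJoin t X).Adj (.inr x) (.inl i) := trivial

open Classical in
theorem hubJoin_degree_inl {t : ℕ} {W : Type*} [Fintype W] (X : SimpleGraph W) (i : Fin t) :
    (hubJoin t X).degree (.inl i) = t + Fintype.card W - 1 := by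
  have : (hubJoin t X).neighborFinset (.inl i) = Finset.univ.erase (.inl i) := by
    ext z
    simp [hubJoin_adj_inl]
  rw [← card_neighborFinset_eq_degree, this, Finset.card_erase_of_mem (Finset.mem_univ _)]
  simp

open Classical in
theorem hubJoin_degree_inr {t : ℕ} {W : Type*} [Fintype W] (X : SimpleGraph W) (x : W) :
    (hubJoin t X).degree (.inr x) = t + X.degree x := by
  have : (hubJoin t X).neighborFinset (.inr x) =
      Finset.univ.disjSum (X.neighborFinset x) := by
    ext (j | y) <;> simp [hubJoin_adj_inr, hubJoin_adj_inr_inl]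
  rw [← card_neighborFinset_eq_degree, this, Finset.card_disjSum]
  simp

theorem hubJoin_card_edgeSet (t : ℕ) {W : Type*} [Fintype W] (X : SimpleGraph W) :
    2 * Nat.card (hubJoin t X).edgeSet =
      t * (t - 1) + 2 * (t * Fintype.card W) + 2 * Nat.card X.edgeSet := by
  classical
  have h1 := (hubJoin t X).sum_degrees_eq_twice_card_edges
  have h2 := X.sum_degrees_eq_twice_card_edges
  rw [Fintype.sum_sum_type] at h1
  simp only [hubJoin_degree_inl, hubJoin_degree_inr, Finset.sum_add_distrib, h2] at h1
  simp only [Finset.sum_const, Finset.card_univ, Fintype.card_fin, smul_eq_mul] at h1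
  rw [Nat.card_eq_fintype_card, Nat.card_eq_fintype_card, ← edgeFinset_card, ← edgeFinset_card,
    ← h1]
  rcases t with _ | t
  · simp
  · simp only [Nat.add_sub_cancel, show t + 1 + Fintype.card W - 1 = t + Fintype.card W by omega]
    ring

/-- A connected regular graph contains no smaller regular graph of the same degree. -/
theorem card_eq_of_contains_of_regular {α β : Type*} [Fintype α] [Fintype β] [Nonempty β]
    {A : SimpleGraph α} {B : SimpleGraph β} [DecidableRel A.Adj] [DecidableRel B.Adj] {d : ℕ}
    (hA : A.Preconnected) (hAd : A.IsRegularOfDegree d) (hBd : B.IsRegularOfDegree d)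
    (h : Contains A B) : Fintype.card α = Fintype.card β := by
  classical
  obtain ⟨f, hf⟩ := h
  have hcl : ∀ b a, A.Adj (f b) a → a ∈ Set.range f := by
    intro b a hba
    have hsub : (B.neighborFinset b).map f ⊆ A.neighborFinset (f b) := by
      intro x hx
      simp only [Finset.mem_map, mem_neighborFinset] at hx ⊢
      obtain ⟨y, hy, rfl⟩ := hx
      exact hf _ _ hy
    have heq := Finset.eq_of_subset_of_card_le hsub (by simp [hAd.degree_eq, hBd.degree_eq])
    have ha : a ∈ A.neighborFinset (f b) := by simpa using hba
    rw [← heq] at ha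
    simp only [Finset.mem_map] at ha
    obtain ⟨y, -, rfl⟩ := ha
    exact ⟨y, rfl⟩
  have hsurj : Function.Surjective f := by
    intro a
    have hr := hA (f (Classical.arbitrary β)) a
    rw [reachable_iff_reflTransGen] at hr
    induction hr with
    | refl => exact ⟨_, rfl⟩
    | tail _ hadj ih =>
      obtain ⟨b, rfl⟩ := ih
      exact hcl b _ hadj
  exact (Fintype.card_of_bijective ⟨f.injective, hsurj⟩).symm

/-- A connected subgraph of a disjoint union lies in one of the two parts. -/
theorem Contains.of_sum {α β γ : Type*} {A : SimpleGraph α} {B : SimpleGraph β}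
    {D : SimpleGraph γ} (hD : D.Connected) (h : Contains (A ⊕g B) D) :
    Contains A D ∨ Contains B D := by
  obtain ⟨f, hf⟩ := h
  obtain ⟨c⟩ := hD.nonempty
  have hreach : ∀ x, (A ⊕g B).Reachable (f c) (f x) := fun x =>
    (hD.preconnected c x).map (⟨f, fun {a b} h => hf a b h⟩ : D →g A ⊕g B)
  rcases hc : f c with a | b
  · have hl : ∀ x, ∃ y, f x = .inl y := by
      intro x
      rcases hx : f x with y | y
      · exact ⟨y, rfl⟩
      · have := hreach x
        rw [hc, hx] at this
        exact absurd this (not_reachable_sum_inl_inr _ _)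
    choose g hg using hl
    refine .inl ⟨⟨g, fun x y hxy => f.injective (by rw [hg, hg, hxy])⟩, fun x y hxy => ?_⟩
    have := hf x y hxy
    rwa [hg, hg, sum_adj_inl] at this
  · have hl : ∀ x, ∃ y, f x = .inr y := by
      intro x
      rcases hx : f x with y | y
      · have := hreach x
        rw [hc, hx] at this
        exact absurd this.symm (not_reachable_sum_inl_inr _ _)
      · exact ⟨y, rfl⟩
    choose g hg using hl
    refine .inr ⟨⟨g, fun x y hxy => f.injective (by rw [hg, hg, hxy])⟩, fun x y hxy => ?_⟩
    have := hf x y hxy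
    rwa [hg, hg, sum_adj_inr] at this

theorem not_contains_bot {α β : Type*} {D : SimpleGraph β} {x y : β} (hxy : D.Adj x y) :
    ¬ Contains (⊥ : SimpleGraph α) D := by
  rintro ⟨f, hf⟩
  exact hf x y hxy

/-- The disjoint union of two cycles and `k` isolated vertices. -/
abbrev twoCycles (a k : ℕ) : SimpleGraph (Fin (a + 3) ⊕ (Fin (k + 3) ⊕ Fin k)) :=
  cycleGraph (a + 3) ⊕g (cycleGraph (k + 3) ⊕g (⊥ : SimpleGraph (Fin k)))

theorem cycleGraph_regular (a : ℕ) : (cycleGraph (a + 3)).IsRegularOfDegree 2 :=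
  fun _ => cycleGraph_degree_three_le

theorem cycleGraph_card_edgeSet (a : ℕ) : Nat.card (cycleGraph (a + 3)).edgeSet = a + 3 := by
  have h := (cycleGraph (a + 3)).sum_degrees_eq_twice_card_edges
  simp only [cycleGraph_degree_three_le, Finset.sum_const, Finset.card_univ, Fintype.card_fin,
    smul_eq_mul] at h
  rw [Nat.card_eq_fintype_card, ← edgeFinset_card]
  omega

theorem sum_card_edgeSet {α β : Type*} (A : SimpleGraph α) (B : SimpleGraph β)
    [Finite A.edgeSet] [Finite B.edgeSet] :
    Nat.card (A ⊕g B).edgeSet = Nat.card A.edgeSet + Nat.card B.edgeSet := by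
  rw [Nat.card_congr edgeSetSumEquiv, Nat.card_sum]

theorem twoCycles_card_edgeSet (a k : ℕ) :
    Nat.card (twoCycles a k).edgeSet = (a + 3) + (k + 3) := by
  rw [sum_card_edgeSet, sum_card_edgeSet, cycleGraph_card_edgeSet, cycleGraph_card_edgeSet]
  simp

theorem eq_of_cycleGraph_contains {a b : ℕ}
    (h : Contains (cycleGraph (a + 3)) (cycleGraph (b + 3))) : a = b := by
  have := card_eq_of_contains_of_regular cycleGraph_preconnected (cycleGraph_regular a)
    (cycleGraph_regular b) h
  simpa using this

theorem cycleGraph_of_twoCycles_contains {a k c : ℕ}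
    (h : Contains (twoCycles a k) (cycleGraph (c + 3))) : a = c ∨ k = c := by
  rcases h.of_sum cycleGraph_connected with h | h
  · exact .inl (eq_of_cycleGraph_contains h)
  · rcases h.of_sum cycleGraph_connected with h | h
    · exact .inr (eq_of_cycleGraph_contains h)
    · exact absurd h (not_contains_bot (x := 0) (y := 1) (by simp [cycleGraph_adj]))

theorem eq_of_twoCycles_contains {t a k a' k' : ℕ} (ha : t < a) (hk : k ≤ t) (ha' : t < a')
    (hk' : k' ≤ t) (h : Contains (twoCycles a' k') (twoCycles a k)) : a = a' ∧ k = k' := by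
  have h1 : Contains (twoCycles a' k') (cycleGraph (a + 3)) :=
    h.trans ⟨⟨Sum.inl, Sum.inl_injective⟩, fun x y hxy => by simpa using hxy⟩
  have h2 : Contains (twoCycles a' k') (cycleGraph (k + 3)) :=
    h.trans ⟨⟨Sum.inr ∘ Sum.inl, Sum.inr_injective.comp Sum.inl_injective⟩,
      fun x y hxy => by simpa using hxy⟩
  have := cycleGraph_of_twoCycles_contains h1
  have := cycleGraph_of_twoCycles_contains h2
  omega

theorem twoCycles_degree_le (a k : ℕ) (x) [Fintype ((twoCycles a k).neighborSet x)] :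
    (twoCycles a k).degree x ≤ 2 := by
  have hcard : ∀ {α : Type} (A : SimpleGraph α) (z : α) [Fintype (A.neighborSet z)],
      A.degree z = (A.neighborSet z).ncard := by
    intro α A z _
    rw [← card_neighborSet_eq_degree, ← Nat.card_eq_fintype_card, Nat.card_coe_set_eq]
  have hcyc : ∀ (n : ℕ) (y : Fin (n + 3)), ((cycleGraph (n + 3)).neighborSet y).ncard = 2 := by
    intro n y
    rw [← hcard]
    exact cycleGraph_degree_three_le
  rw [hcard]
  rcases x with x | x | x
  · rw [neighborSet_sum_inl, Set.ncard_image_of_injective _ Sum.inl_injective, hcyc]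
  · rw [neighborSet_sum_inr, Set.ncard_image_of_injective _ Sum.inr_injective,
      neighborSet_sum_inl, Set.ncard_image_of_injective _ Sum.inl_injective, hcyc]
  · rw [neighborSet_sum_inr, Set.ncard_image_of_injective _ Sum.inr_injective,
      neighborSet_sum_inr, Set.ncard_image_of_injective _ Sum.inr_injective]
    simp

theorem hubJoin_connected {t : ℕ} (ht : 0 < t) {W : Type*} (X : SimpleGraph W) :
    (hubJoin t X).Connected := by
  have hr : ∀ z, (hubJoin t X).Reachable (.inl ⟨0, ht⟩) z := by
    intro z
    by_cases hz : z = .inl ⟨0, ht⟩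
    · rw [hz]
    · exact (hubJoin_adj_inl.2 hz).reachable
  exact (connected_iff _).2 ⟨fun u v => (hr u).symm.trans (hr v), ⟨.inl ⟨0, ht⟩⟩⟩

open Classical in
/-- Hubs can be cancelled when the target has small degree outside its hubs. -/
theorem Contains.of_hubJoin {t D : ℕ} {V W : Type*} [Fintype V] [Fintype W]
    {X : SimpleGraph V} {Y : SimpleGraph W} (hY : ∀ y, Y.degree y ≤ D)
    (hD : D + 1 < Fintype.card V) (h : Contains (hubJoin t Y) (hubJoin t X)) : Contains Y X := by
  obtain ⟨f, hf⟩ := h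
  have hdeg : ∀ v, (hubJoin t X).degree v ≤ (hubJoin t Y).degree (f v) := by
    intro v
    rw [← card_neighborFinset_eq_degree, ← card_neighborFinset_eq_degree, ← Finset.card_map f]
    refine Finset.card_le_card fun x hx => ?_
    simp only [Finset.mem_map, mem_neighborFinset] at hx ⊢
    obtain ⟨y, hy, rfl⟩ := hx
    exact hf _ _ hy
  have hhub : ∀ i : Fin t, ∃ j : Fin t, f (.inl i) = .inl j := by
    intro i
    rcases hi : f (.inl i) with j | y
    · exact ⟨j, rfl⟩
    · have := hdeg (.inl i)
      rw [hi, hubJoin_degree_inl, hubJoin_degree_inr] at this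
      have := hY y
      omega
  choose g hg using hhub
  have hginj : Function.Injective g := fun i j hij =>
    Sum.inl_injective (f.injective (by rw [hg, hg, hij]))
  have hrest : ∀ x : V, ∃ y : W, f (.inr x) = .inr y := by
    intro x
    rcases hx : f (.inr x) with j | y
    · obtain ⟨i, rfl⟩ := (Finite.injective_iff_surjective.1 hginj) j
      have := f.injective (hx.trans (hg i).symm)
      simp at this
    · exact ⟨y, rfl⟩
  choose e he using hrest
  refine ⟨⟨e, fun x y hxy => Sum.inr_injective (f.injective (by rw [he, he, hxy]))⟩,
    fun x y hxy => ?_⟩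
  have := hf _ _ (hubJoin_adj_inr.2 hxy : (hubJoin t X).Adj (.inr x) (.inr y))
  rwa [he, he] at this

/-- The graph `A` together with infinitely many isolated vertices. -/
abbrev padded {α : Type*} (A : SimpleGraph α) : SimpleGraph (α ⊕ ℕ) :=
  A ⊕g (⊥ : SimpleGraph ℕ)

theorem padded_card_edgeSet {α : Type*} [Finite α] (A : SimpleGraph α) :
    Finite (padded A).edgeSet ∧ Nat.card (padded A).edgeSet = Nat.card A.edgeSet := by
  have : Finite (⊥ : SimpleGraph ℕ).edgeSet := by
    rw [edgeSet_bot]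
    infer_instance
  refine ⟨Finite.of_equiv _ edgeSetSumEquiv.symm, ?_⟩
  rw [sum_card_edgeSet]
  simp

theorem eq_of_padded_contains {t a k a' k' : ℕ} (ht : 0 < t) (ha : t < a) (hk : k ≤ t)
    (ha' : t < a') (hk' : k' ≤ t)
    (h : Contains (padded (hubJoin t (twoCycles a' k'))) (hubJoin t (twoCycles a k))) :
    a = a' ∧ k = k' := by
  rcases h.of_sum (hubJoin_connected ht _) with h | h
  · refine eq_of_twoCycles_contains ha hk ha' hk'
      (h.of_hubJoin (D := 2) (fun y => by convert twoCycles_degree_le a' k' y) ?_)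
    simp only [Fintype.card_sum, Fintype.card_fin]
    omega
  · exact absurd h (not_contains_bot (x := .inl ⟨0, ht⟩) (y := .inr (.inl 0))
      (hubJoin_adj_inl.2 (by simp)))

/-- A rank function on the vertices of `padded (hubJoin t X)` such that a vertex of higher rank
is joined to all the neighbours of a vertex of lower rank. -/
def hubRank {t : ℕ} {W : Type*} : (Fin t ⊕ W) ⊕ ℕ → ℕ
  | .inl (.inl _) => 2
  | .inl (.inr _) => 1
  | .inr _ => 0

theorem hubRank_le_two {t : ℕ} {W : Type*} (p : (Fin t ⊕ W) ⊕ ℕ) : hubRank p ≤ 2 := by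
  rcases p with (_ | _) | _ <;> simp [hubRank]

theorem adj_of_hubRank_lt {t : ℕ} {W : Type*} {X : SimpleGraph W} {p q z : (Fin t ⊕ W) ⊕ ℕ}
    (hpq : hubRank p < hubRank q) (hz : z ≠ q) (hp : (padded (hubJoin t X)).Adj p z) :
    (padded (hubJoin t X)).Adj q z := by
  rcases p with (p | p) | p <;> rcases q with (q | q) | q <;> rcases z with z | z <;>
    simp [hubRank, hubJoin_adj_inl] at *
  exact hz

/-- An embedding into a padded hub graph can be chosen so as to use the vertices of highest
rank. -/
theorem exists_embedding_hubRank_le {t : ℕ} {W α : Type*} [Fintype α] {X : SimpleGraph W}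
    {G : SimpleGraph α} (h : Contains (padded (hubJoin t X)) G) :
    ∃ f : α ↪ (Fin t ⊕ W) ⊕ ℕ,
      (∀ a b, G.Adj a b → (padded (hubJoin t X)).Adj (f a) (f b)) ∧
      ∀ a, ∀ q ∉ Set.range f, hubRank q ≤ hubRank (f a) := by
  classical
  set S : Set ℕ := {m | ∃ f : α ↪ (Fin t ⊕ W) ⊕ ℕ,
    (∀ a b, G.Adj a b → (padded (hubJoin t X)).Adj (f a) (f b)) ∧ ∑ a, hubRank (f a) = m}
  have hne : S.Nonempty := by
    obtain ⟨f, hf⟩ := h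
    exact ⟨_, f, hf, rfl⟩
  have hbdd : BddAbove S := by
    refine ⟨∑ _a : α, 2, ?_⟩
    rintro m ⟨f, -, rfl⟩
    exact Finset.sum_le_sum fun a _ => hubRank_le_two _
  obtain ⟨f, hf, hsum⟩ := Nat.sSup_mem hne hbdd
  refine ⟨f, hf, fun a q hq => ?_⟩
  by_contra! hlt
  have hq' : ∀ b, f b ≠ q := fun b hb => hq ⟨b, hb⟩
  let g : α ↪ (Fin t ⊕ W) ⊕ ℕ := f.trans (Equiv.swap (f a) q).toEmbedding
  have hga : g a = q := by simp [g]
  have hgb : ∀ b, b ≠ a → g b = f b := fun b hb => by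
    simp only [g, Function.Embedding.trans_apply, Equiv.coe_toEmbedding]
    exact Equiv.swap_apply_of_ne_of_ne (fun h => hb (f.injective h)) (hq' b)
  have hg : ∀ b c, G.Adj b c → (padded (hubJoin t X)).Adj (g b) (g c) := by
    intro b c hbc
    by_cases hb : b = a
    · subst hb
      rw [hga, hgb c hbc.ne']
      exact adj_of_hubRank_lt hlt (hq' c) (hf _ _ hbc)
    · by_cases hc : c = a
      · subst hc
        rw [hga, hgb b hb]
        exact (adj_of_hubRank_lt hlt (hq' b) (hf _ _ hbc).symm).symm
      · rw [hgb b hb, hgb c hc]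
        exact hf _ _ hbc
  have hle : ∑ b, hubRank (g b) ≤ sSup S := le_csSup hbdd ⟨g, hg, rfl⟩
  rw [← hsum] at hle
  refine absurd hle (not_le.2 (Finset.sum_lt_sum (fun b _ => ?_) ⟨a, Finset.mem_univ _, ?_⟩))
  · by_cases hb : b = a
    · rw [hb, hga]
      exact hlt.le
    · rw [hgb b hb]
  · rwa [hga]

/-- A maximal subgraph of a padded hub graph either contains the whole hub graph or has `t`
vertices adjacent to all others. -/
theorem card_edgeSet_ge_of_maximal {n t : ℕ} {W : Type*} [Finite W] {X : SimpleGraph W}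
    {G : SimpleGraph (Fin n)} (htn : t < n) (h : Contains (padded (hubJoin t X)) G)
    (hmax : ∀ u v, u ≠ v → ¬ G.Adj u v →
      ¬ Contains (padded (hubJoin t X)) (G ⊔ SimpleGraph.fromEdgeSet {s(u, v)})) :
    Nat.card (hubJoin t X).edgeSet ≤ Nat.card G.edgeSet ∨
      t * (n - 1) ≤ 2 * Nat.card G.edgeSet := by
  classical
  obtain ⟨f, hf, hrank⟩ := exists_embedding_hubRank_le h
  have hadj : ∀ u v, (padded (hubJoin t X)).Adj (f u) (f v) → G.Adj u v := by
    intro u v huv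
    by_contra hG
    refine hmax u v (fun h => huv.ne (by rw [h])) hG ⟨f, fun a b hab => ?_⟩
    rw [sup_adj, fromEdgeSet_adj] at hab
    rcases hab with hab | ⟨hab, -⟩
    · exact hf a b hab
    · rw [Set.mem_singleton_iff, Sym2.eq_iff] at hab
      rcases hab with ⟨rfl, rfl⟩ | ⟨rfl, rfl⟩
      · exact huv
      · exact huv.symm
  have hhub : ∀ i : Fin t, ∃ x, f x = .inl (.inl i) := by
    intro i
    by_contra hi
    have himg : ∀ x, ∃ j : Fin t, f x = .inl (.inl j) := by
      intro x
      have := hrank x (.inl (.inl i)) hi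
      rcases hx : f x with (j | j) | j
      · exact ⟨j, rfl⟩
      all_goals simp [hx, hubRank] at this
    choose g hg using himg
    have hginj : Function.Injective g := fun x y hxy => f.injective (by rw [hg, hg, hxy])
    have := Fintype.card_le_of_injective g hginj
    simp only [Fintype.card_fin] at this
    omega
  by_cases hall : ∀ v, ∃ x, f x = .inl v
  · left
    choose e he using hall
    refine Contains.card_edgeSet_le_s6 ⟨⟨e, fun x y hxy => Sum.inl_injective (β := ℕ) ?_⟩,
      fun a b hab => hadj _ _ ?_⟩
    · rw [← he, ← he, hxy]
    · have : (padded (hubJoin t X)).Adj (f (e a)) (f (e b)) := by rwa [he, he, sum_adj_inl]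
      exact this
  · right
    push Not at hall
    obtain ⟨v, hv⟩ := hall
    have himg : ∀ x, ∃ y, f x = .inl y := by
      intro x
      have := hrank x (.inl v) (by rintro ⟨y, hy⟩; exact hv y hy)
      rcases hx : f x with y | y
      · exact ⟨y, rfl⟩
      · rcases v with v | v <;> simp [hx, hubRank] at this
    choose e he using hhub
    have heinj : Function.Injective e := fun i j hij => by
      have := he i
      rw [hij, he j] at this
      simpa using this.symm
    have hdeg : ∀ i, G.degree (e i) = n - 1 := by
      intro i
      have : G.neighborFinset (e i) = Finset.univ.erase (e i) := by
        ext y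
        simp only [mem_neighborFinset, Finset.mem_erase, Finset.mem_univ, and_true]
        refine ⟨fun h => h.ne', fun hy => hadj _ _ ?_⟩
        obtain ⟨z, hz⟩ := himg y
        rw [he, hz, sum_adj_inl, hubJoin_adj_inl]
        rintro rfl
        exact hy (f.injective (hz.trans (he i).symm))
      rw [← card_neighborFinset_eq_degree, this, Finset.card_erase_of_mem (Finset.mem_univ _)]
      simp
    rw [Nat.card_eq_fintype_card, ← edgeFinset_card, ← G.sum_degrees_eq_twice_card_edges]
    calc t * (n - 1) = ∑ i, G.degree (e i) := by simp [hdeg]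
      _ = ∑ x ∈ Finset.univ.map ⟨e, heinj⟩, G.degree x := by simp
      _ ≤ ∑ x, G.degree x := Finset.sum_le_sum_of_subset (Finset.subset_univ _)

/-- `A` together with isolated vertices, as a graph on `n` vertices. -/
theorem exists_embedding_padded {α : Type*} [Fintype α] {n : ℕ} (hn : Fintype.card α ≤ n) :
    ∃ f : Fin n ↪ α ⊕ ℕ, ∀ a, ∃ x, f x = .inl a := by
  have e : Fin n ≃ α ⊕ Fin (n - Fintype.card α) := Fintype.equivOfCardEq (by
    simp only [Fintype.card_fin, Fintype.card_sum]
    omega)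
  refine ⟨e.toEmbedding.trans ((Function.Embedding.refl α).sumMap Fin.valEmbedding),
    fun a => ⟨e.symm (.inl a), by simp⟩⟩

theorem two_mul_hubJoin_twoCycles_card_edgeSet (t a k : ℕ) :
    2 * Nat.card (hubJoin t (twoCycles a k)).edgeSet =
      t * (t - 1) + 2 * (t * ((a + 3) + (k + 3) + k)) + 2 * ((a + 3) + (k + 3)) := by
  rw [hubJoin_card_edgeSet, twoCycles_card_edgeSet]
  simp only [Fintype.card_sum, Fintype.card_fin]
  ring

theorem exists_hubJoin_card_edgeSet_eq {t j : ℕ}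
    (hj : t * t + (t + 1) * (3 * t + 7) ≤ j) :
    ∃ a k, t < a ∧ k ≤ t ∧ Nat.card (hubJoin t (twoCycles a k)).edgeSet = j := by
  obtain ⟨c, hc⟩ : ∃ c, t * (t - 1) = c + c := Nat.even_mul_pred_self t
  have hct : t * (t - 1) ≤ t * t := Nat.mul_le_mul_left _ (Nat.sub_le _ _)
  obtain ⟨J, rfl⟩ : ∃ J, j = c + J := ⟨j - c, by omega⟩
  have hdiv := Nat.div_add_mod (J + t) (t + 1)
  have hmod := Nat.mod_lt (J + t) (Nat.succ_pos t)
  set q := (J + t) / (t + 1)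
  set r := (J + t) % (t + 1)
  have hq : 3 * t + 7 ≤ q := (Nat.le_div_iff_mul_le (by omega)).2 (by
    rw [mul_comm]
    omega)
  obtain ⟨k, hk⟩ : ∃ k, t = r + k := ⟨t - r, by omega⟩
  obtain ⟨a, ha⟩ : ∃ a, q = a + 2 * k + 6 := ⟨q - 2 * k - 6, by omega⟩
  refine ⟨a, k, by omega, by omega, ?_⟩
  have h2 := two_mul_hubJoin_twoCycles_card_edgeSet t a k
  rw [ha] at hdiv
  have hk2 : J + k = (t + 1) * (a + 2 * k + 6) := by omega
  nlinarith

/-- `G` is contained in one of the hub graphs with at least `m` edges, up to isolated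
vertices. -/
def HubAdmissible (t : ℕ) (m : ℤ) {α : Type*} (G : SimpleGraph α) : Prop :=
  ∃ a k, t < a ∧ k ≤ t ∧ m ≤ Nat.card (hubJoin t (twoCycles a k)).edgeSet ∧
    Contains (padded (hubJoin t (twoCycles a k))) G

theorem HubAdmissible.of_contains {t : ℕ} {m m' : ℤ} {α β : Type*} {G : SimpleGraph α}
    {F : SimpleGraph β} (hG : HubAdmissible t m G) (hm : m' ≤ m) (h : Contains G F) :
    HubAdmissible t m' F := by
  obtain ⟨a, k, ha, hk, hmE, hc⟩ := hG
  exact ⟨a, k, ha, hk, hm.trans hmE, hc.trans h⟩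

theorem hubAdmissible_bot (t : ℕ) (m : ℤ) (n : ℕ) :
    HubAdmissible t m (⊥ : SimpleGraph (Fin n)) := by
  obtain ⟨a, k, ha, hk, h⟩ := exists_hubJoin_card_edgeSet_eq
    (t := t) (j := t * t + (t + 1) * (3 * t + 7) + m.toNat) (by omega)
  exact ⟨a, k, ha, hk, by rw [h]; have := Int.self_le_toNat m; omega,
    ⟨Fin.valEmbedding.trans ⟨Sum.inr, Sum.inr_injective⟩, fun _ _ h => h.elim⟩⟩

/-- The graphs on at least `n₀` vertices that are not admissible. -/
def hubFamily (t n₀ : ℕ) (s : ℕ → ℤ) : GraphFam :=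
  {F | n₀ ≤ F.1 ∧ ¬ HubAdmissible t (s F.1) F.2}

theorem exists_hubFamily_contains_iff {t n₀ n : ℕ} {s : ℕ → ℤ} (hs : MonotoneOn s (Set.Ici n₀))
    (hn : n₀ ≤ n) (G : SimpleGraph (Fin n)) :
    (∃ F ∈ hubFamily t n₀ s, Contains G F.2) ↔ ¬ HubAdmissible t (s n) G := by
  constructor
  · rintro ⟨⟨N, F⟩, ⟨hN, hF⟩, hc⟩ hG
    refine hF (hG.of_contains (hs hN hn ?_) hc)
    obtain ⟨f, -⟩ := hc
    simpa using Fintype.card_le_of_embedding f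
  · intro hG
    exact ⟨⟨n, G⟩, ⟨hn, hG⟩, Contains.refl G⟩

theorem famSaturated_hubFamily_iff {t n₀ n : ℕ} {s : ℕ → ℤ} (hs : MonotoneOn s (Set.Ici n₀))
    (hn : n₀ ≤ n) (G : SimpleGraph (Fin n)) :
    FamSaturated (hubFamily t n₀ s) G ↔ HubAdmissible t (s n) G ∧
      ∀ u v, u ≠ v → ¬ G.Adj u v →
        ¬ HubAdmissible t (s n) (G ⊔ SimpleGraph.fromEdgeSet {s(u, v)}) := by
  have h1 : (∀ F ∈ hubFamily t n₀ s, ¬ Contains G F.2) ↔ HubAdmissible t (s n) G := by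
    rw [← not_iff_not, ← exists_hubFamily_contains_iff hs hn]
    push Not
    rfl
  simp only [FamSaturated, h1, exists_hubFamily_contains_iff hs hn]

theorem le_card_edgeSet_of_saturated {t n : ℕ} {m : ℤ} (htn : t < n)
    (hm : 2 * m ≤ t * (n - 1)) {G : SimpleGraph (Fin n)} (hG : HubAdmissible t m G)
    (hmax : ∀ u v, u ≠ v → ¬ G.Adj u v →
      ¬ HubAdmissible t m (G ⊔ SimpleGraph.fromEdgeSet {s(u, v)})) :
    m ≤ Nat.card G.edgeSet := by
  obtain ⟨a, k, ha, hk, hmE, hc⟩ := hG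
  rcases card_edgeSet_ge_of_maximal htn hc
    (fun u v huv hG hcon => hmax u v huv hG ⟨a, k, ha, hk, hmE, hcon⟩) with h | h
  · exact hmE.trans (by exact_mod_cast h)
  · have h' : (t : ℤ) * (n - 1) ≤ 2 * Nat.card G.edgeSet := by
      have h0 : ((n - 1 : ℕ) : ℤ) = n - 1 := by push_cast [show 1 ≤ n by omega]; ring
      rw [← h0]
      exact_mod_cast h
    linarith

theorem exists_saturated {t a k n : ℕ} (ht : 0 < t) (ha : t < a) (hk : k ≤ t)
    (hn : t + ((a + 3) + (k + 3) + k) ≤ n) :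
    ∃ G : SimpleGraph (Fin n), G ≠ ⊤ ∧
      Nat.card G.edgeSet = Nat.card (hubJoin t (twoCycles a k)).edgeSet ∧
      HubAdmissible t (Nat.card (hubJoin t (twoCycles a k)).edgeSet) G ∧
      ∀ u v, u ≠ v → ¬ G.Adj u v → ¬ HubAdmissible t
        (Nat.card (hubJoin t (twoCycles a k)).edgeSet)
        (G ⊔ SimpleGraph.fromEdgeSet {s(u, v)}) := by
  set H := hubJoin t (twoCycles a k) with hH
  obtain ⟨f, hf⟩ := exists_embedding_padded
    (α := Fin t ⊕ (Fin (a + 3) ⊕ (Fin (k + 3) ⊕ Fin k))) (n := n) (by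
      simp only [Fintype.card_sum, Fintype.card_fin]
      omega)
  set G := (padded H).comap f with hG
  have hc1 : Contains (padded H) G := ⟨f, fun _ _ h => h⟩
  have hc2 : Contains G H := by
    choose e he using hf
    refine ⟨⟨e, fun x y hxy => Sum.inl_injective (β := ℕ) (by rw [← he, ← he, hxy])⟩,
      fun x y hxy => ?_⟩
    have : (padded H).Adj (f (e x)) (f (e y)) := by rwa [he, he, sum_adj_inl]
    exact this
  obtain ⟨hfin, hcard⟩ := padded_card_edgeSet H
  have hGcard : Nat.card G.edgeSet = Nat.card H.edgeSet :=
    le_antisymm (hcard ▸ hc1.card_edgeSet_le_s6) hc2.card_edgeSet_le_s6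
  refine ⟨G, ?_, hGcard, ⟨a, k, ha, hk, le_rfl, hc1⟩, ?_⟩
  · intro htop
    obtain ⟨x, hx⟩ := hf (.inr (.inl 0))
    obtain ⟨y, hy⟩ := hf (.inr (.inr (.inl 0)))
    have hxy : G.Adj x y := by
      rw [htop, top_adj]
      rintro rfl
      rw [hx] at hy
      simp at hy
    rw [hG, comap_adj, hx, hy, sum_adj_inl, hH, hubJoin_adj_inr] at hxy
    exact not_adj_sum_inl_inr _ _ hxy
  · rintro u v huv hnadj ⟨a', k', ha', hk', -, hcon⟩
    have hle : G ≤ G ⊔ SimpleGraph.fromEdgeSet {s(u, v)} := le_sup_left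
    obtain ⟨rfl, rfl⟩ := eq_of_padded_contains ht ha hk ha' hk' (hcon.trans (hc2.mono hle))
    have h1 := hcon.card_edgeSet_le_s6
    rw [← hH, hcard, ← hGcard] at h1
    have hlt : G.edgeSet ⊂ (G ⊔ SimpleGraph.fromEdgeSet {s(u, v)}).edgeSet := by
      rw [edgeSet_ssubset_edgeSet]
      refine lt_of_le_of_ne hle fun heq => hnadj ?_
      rw [heq]
      simp [huv]
    have h2 := Set.ncard_lt_ncard hlt (Set.toFinite _)
    rw [← Nat.card_coe_set_eq, ← Nat.card_coe_set_eq] at h2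
    omega

/-- Every sequence of integers that is `O(n)`, eventually non-decreasing and tends to infinity is
eventually equal to `sat(·,𝓕)` for some family `𝓕`. -/
theorem stmt6 (s : ℕ → ℤ)
    (h1 : ∃ C : ℝ, ∀ n : ℕ, 1 ≤ n → (s n : ℝ) ≤ C * n)
    (h2 : ∀ᶠ n : ℕ in atTop, s n ≤ s (n + 1))
    (h3 : Tendsto s atTop atTop) :
    ∃ 𝓕 : GraphFam, 𝓕.Nonempty ∧ (∀ F ∈ 𝓕, 1 ≤ Nat.card F.2.edgeSet) ∧
      ∀ᶠ n : ℕ in atTop, (sat n 𝓕 : ℤ) = s n := by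
  obtain ⟨C, hC⟩ := h1
  obtain ⟨N, hN⟩ := eventually_atTop.1 h2
  obtain ⟨c, hcC⟩ := exists_nat_ge (max C 1)
  have hc1 : 1 ≤ c := by exact_mod_cast (le_max_right C 1).trans hcC
  have hsc : ∀ n : ℕ, 1 ≤ n → s n ≤ c * n := by
    intro n hn
    have h := (hC n hn).trans (mul_le_mul_of_nonneg_right ((le_max_left C 1).trans hcC)
      (Nat.cast_nonneg n))
    exact_mod_cast h
  obtain ⟨t, ht⟩ : ∃ t, t = 4 * c := ⟨_, rfl⟩
  obtain ⟨M, hM⟩ := eventually_atTop.1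
    (h3.eventually_ge_atTop ((t * t + (t + 1) * (3 * t + 7) : ℕ) : ℤ))
  obtain ⟨n₀, hn₀⟩ : ∃ n₀, n₀ = N + M + 2 * t + 1 := ⟨_, rfl⟩
  have hmono : MonotoneOn s (Set.Ici n₀) :=
    monotoneOn_nat_Ici_of_le_succ fun n hn => hN n (by omega)
  have hsat : ∀ n ≥ n₀, ∃ G : SimpleGraph (Fin n), G ≠ ⊤ ∧
      FamSaturated (hubFamily t n₀ s) G ∧ (Nat.card G.edgeSet : ℤ) = s n := by
    intro n hn
    obtain ⟨j, hj⟩ : ∃ j : ℕ, s n = j := Int.eq_ofNat_of_zero_le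
      ((Int.natCast_nonneg _).trans (hM n (by omega)))
    have hjM := hM n (by omega)
    rw [hj] at hjM
    obtain ⟨a, k, ha, hk, hE⟩ := exists_hubJoin_card_edgeSet_eq (t := t) (j := j)
      (by exact_mod_cast hjM)
    have hjc : j ≤ c * n := by
      have := hsc n (by omega)
      rw [hj] at this
      exact_mod_cast this
    have h2E := two_mul_hubJoin_twoCycles_card_edgeSet t a k
    rw [hE] at h2E
    have hw : 4 * ((a + 3) + (k + 3) + k) ≤ n := by
      refine Nat.le_of_mul_le_mul_left ?_ hc1
      calc c * (4 * ((a + 3) + (k + 3) + k)) = t * ((a + 3) + (k + 3) + k) := by rw [ht]; ring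
        _ ≤ j := by omega
        _ ≤ c * n := hjc
    obtain ⟨G, hGtop, hGcard, hGadm, hGmax⟩ := exists_saturated (n := n) (by omega) ha hk
      (by omega)
    rw [hE, ← hj] at hGadm hGmax
    exact ⟨G, hGtop, (famSaturated_hubFamily_iff hmono hn G).2 ⟨hGadm, hGmax⟩, by
      rw [hGcard, hE, hj]⟩
  refine ⟨hubFamily t n₀ s, ?_, ?_, ?_⟩
  · obtain ⟨G, hGtop, ⟨-, hG⟩, -⟩ := hsat n₀ le_rfl
    obtain ⟨u, v, huv, hadj⟩ : ∃ u v, u ≠ v ∧ ¬ G.Adj u v := by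
      by_contra! h
      exact hGtop (eq_top_iff.2 fun u v huv => h u v huv)
    obtain ⟨F, hF, -⟩ := hG u v huv hadj
    exact ⟨F, hF⟩
  · rintro ⟨n, F⟩ ⟨-, hF⟩
    by_contra! h
    have hbot : F = ⊥ := by
      rw [Nat.lt_one_iff, Finite.card_eq_zero_iff, Set.isEmpty_coe_sort] at h
      exact edgeSet_eq_empty.1 h
    subst hbot
    exact hF (hubAdmissible_bot t _ n)
  · refine eventually_atTop.2 ⟨n₀, fun n hn => ?_⟩
    obtain ⟨G, -, hG, hcard⟩ := hsat n hn
    rw [← hcard, Nat.cast_inj]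
    refine le_antisymm (Nat.sInf_le ⟨G, hG, rfl⟩) (le_csInf ⟨_, G, hG, rfl⟩ ?_)
    rintro m ⟨G', hG', rfl⟩
    obtain ⟨hadm, hmax⟩ := (famSaturated_hubFamily_iff hmono hn G').1 hG'
    have hle := le_card_edgeSet_of_saturated (by omega) ?_ hadm hmax
    · rw [← hcard] at hle
      exact_mod_cast hle
    · have h1 := hsc n (by omega)
      have h2 : (2 : ℤ) ≤ n := by omega
      have h3 : (0 : ℤ) ≤ c := Int.natCast_nonneg c
      rw [ht]
      push_cast
      nlinarith
end
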